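/- arXiv:math/0406195 — 4 statements merged into one kernel-verified Lean document; each statement's English description precedes it below -/
import Mathlib

section
/- Let L be an algebraically closed field and let f, g ∈ L[x,y] be nonconstant polynomials of total degrees d and e respectively. Assume that the degree-d homogeneous component of f and the degree-e homogeneous component of g have no common zero in L² \ {(0,0)} (i.e., the projective curves f = 0 and g = 0 have no common point on the line at infinity). Then the set Z = {p ∈ L² : f(p) = g(p) = 0} of common zeros is finite and ∑_{p ∈ Z} I(f,g,p) = d·e. -/
/-!
Since `f` and `g` have no common point at infinity, their leading forms are coprime. Whenever
`u ∈ (f)` and `v ∈ (g)` have cancelling leading forms, the latter are then multiples of the leading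
form of `f * g`, so that both degrees can be lowered by moving a multiple of `f * g` from `u` to
`v`. Hence the elements of degree at most `n` of `(f, g)` are exactly the sums of such elements of
`(f)` and of `(g)`, and as `(f) ∩ (g) = (f * g)`, counting dimensions shows that the polynomials of
degree at most `n + d + e` span a space of dimension `d * e` in `L[x, y] ⧸ (f, g)`, whatever `n`.
So the quotient itself has dimension `d * e`. It is Artinian, therefore the product of its
localizations at its primes, which by the Nullstellensatz are the common zeros of `f` and `g`.
-/

open MvPolynomial

/-- The maximal ideal of `L[x,y]` corresponding to the point `p = (p₁, p₂)`, i.e. the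
kernel of evaluation at `p`, which is the ideal `(x - p₁, y - p₂)`. -/
noncomputable def ptIdeal (L : Type) [Field L] (p : L × L) : Ideal (MvPolynomial (Fin 2) L) :=
  RingHom.ker (aeval (R := L) ![p.1, p.2])

theorem ptIdeal_isMaximal (L : Type) [Field L] (p : L × L) : (ptIdeal L p).IsMaximal :=
  RingHom.ker_isMaximal_of_surjective _ (fun x => ⟨C x, by simp⟩)

/-- The intersection multiplicity `I(f, g, p)` of the plane curves `f = 0` and `g = 0`
at the point `p`: the dimension over `L` of the localization of `L[x,y]/(f,g)` at the
maximal ideal `(x - p₁, y - p₂)` (computed as the quotient of the localization of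
`L[x,y]` at that maximal ideal by the ideal generated by `f` and `g`). -/
noncomputable def interMult (L : Type) [Field L] (f g : MvPolynomial (Fin 2) L)
    (p : L × L) : Cardinal :=
  haveI : (ptIdeal L p).IsPrime := (ptIdeal_isMaximal L p).isPrime
  letI : Algebra L (Localization.AtPrime (ptIdeal L p)) :=
    ((algebraMap (MvPolynomial (Fin 2) L) (Localization.AtPrime (ptIdeal L p))).comp
      (algebraMap L (MvPolynomial (Fin 2) L))).toAlgebra
  Module.rank L
    (Localization.AtPrime (ptIdeal L p) ⧸
      (Ideal.span {algebraMap (MvPolynomial (Fin 2) L) (Localization.AtPrime (ptIdeal L p)) f,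
        algebraMap (MvPolynomial (Fin 2) L) (Localization.AtPrime (ptIdeal L p)) g}))

section LeadingForm

variable {σ R : Type*}

section CommSemiring

variable [CommSemiring R] {p q : MvPolynomial σ R} {m n : ℕ}

/-- The leading form of a polynomial: its homogeneous component of top degree, whose zeros are
the points at infinity of the hypersurface `p = 0`. It is `0` for `p = 0`. -/
noncomputable def leadingForm (p : MvPolynomial σ R) : MvPolynomial σ R :=
  homogeneousComponent p.totalDegree p

theorem isHomogeneous_leadingForm (p : MvPolynomial σ R) :
    (leadingForm p).IsHomogeneous p.totalDegree :=
  homogeneousComponent_isHomogeneous _ _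

theorem leadingForm_ne_zero (hp : p ≠ 0) : leadingForm p ≠ 0 := by
  obtain ⟨s, hs, hdeg⟩ :=
    Finset.exists_mem_eq_sup p.support (support_nonempty.mpr hp) fun s ↦ s.sum fun _ e ↦ e
  refine ne_zero_iff.mpr ⟨s, ?_⟩
  have hs' : s.degree = p.totalDegree := hdeg.symm
  rw [leadingForm, coeff_homogeneousComponent, if_pos hs']
  exact mem_support_iff.mp hs

theorem totalDegree_leadingForm (p : MvPolynomial σ R) :
    (leadingForm p).totalDegree = p.totalDegree := by
  rcases eq_or_ne p 0 with rfl | hp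
  · simp [leadingForm]
  · exact (isHomogeneous_leadingForm p).totalDegree (leadingForm_ne_zero hp)

theorem leadingForm_eq_self (hp : p.IsHomogeneous n) : leadingForm p = p := by
  rcases eq_or_ne p 0 with rfl | h0
  · simp [leadingForm]
  · rw [leadingForm, hp.totalDegree h0, homogeneousComponent_eq_self hp]

theorem totalDegree_le_of_homogeneousComponent_eq_zero (hp : p.totalDegree ≤ n + 1)
    (h : homogeneousComponent (n + 1) p = 0) : p.totalDegree ≤ n := by
  by_contra! hn
  have hdeg : p.totalDegree = n + 1 := by lia
  have hp0 : p ≠ 0 := by rintro rfl; simp at hdeg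
  exact leadingForm_ne_zero hp0 (by rwa [leadingForm, hdeg])

theorem homogeneousComponent_mul_of_totalDegree_le (hp : p.totalDegree ≤ m)
    (hq : q.totalDegree ≤ n) :
    homogeneousComponent (m + n) (p * q) =
      homogeneousComponent m p * homogeneousComponent n q := by
  classical
  ext s
  rw [coeff_homogeneousComponent]
  split_ifs with hs
  · rw [coeff_mul, coeff_mul]
    refine Finset.sum_congr rfl fun ⟨u, v⟩ huv ↦ ?_
    have huv' : u.degree + v.degree = m + n := by
      rw [← map_add, Finset.HasAntidiagonal.mem_antidiagonal.mp huv, hs]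
    simp only [coeff_homogeneousComponent]
    rcases lt_trichotomy u.degree m with h | h | h
    · have hv : coeff v q = 0 := coeff_eq_zero_of_totalDegree_lt (show _ < v.degree by lia)
      simp [hv]
    · rw [if_pos h, if_pos (by lia)]
    · have hu : coeff u p = 0 := coeff_eq_zero_of_totalDegree_lt (show _ < u.degree by lia)
      simp [hu]
  · exact (((homogeneousComponent_isHomogeneous m p).mul
      (homogeneousComponent_isHomogeneous n q)).coeff_eq_zero hs).symm

theorem leadingForm_mul [NoZeroDivisors R] (p q : MvPolynomial σ R) :
    leadingForm (p * q) = leadingForm p * leadingForm q := by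
  rcases eq_or_ne p 0 with rfl | hp
  · simp [leadingForm]
  rcases eq_or_ne q 0 with rfl | hq
  · simp [leadingForm]
  rw [leadingForm, totalDegree_mul_of_isDomain hp hq,
    homogeneousComponent_mul_of_totalDegree_le le_rfl le_rfl, leadingForm, leadingForm]

theorem leadingForm_dvd_leadingForm [NoZeroDivisors R] (h : p ∣ q) :
    leadingForm p ∣ leadingForm q := by
  obtain ⟨c, rfl⟩ := h
  exact ⟨leadingForm c, leadingForm_mul p c⟩

theorem leadingForm_dvd_homogeneousComponent [NoZeroDivisors R] (h : p ∣ q)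
    (hq : q.totalDegree ≤ n) : leadingForm p ∣ homogeneousComponent n q := by
  rcases hq.lt_or_eq with hlt | rfl
  · rw [homogeneousComponent_eq_zero _ _ hlt]
    exact dvd_zero _
  · exact leadingForm_dvd_leadingForm h

theorem exists_dvd_homogeneousComponent_eq [NoZeroDivisors R] (hq : q.IsHomogeneous n)
    (h : leadingForm p ∣ q) :
    ∃ w, p ∣ w ∧ w.totalDegree ≤ n ∧ homogeneousComponent n w = q := by
  obtain ⟨c, rfl⟩ := h
  have hlead : leadingForm (p * c) = leadingForm p * c := by
    rw [← leadingForm_eq_self hq, leadingForm_mul, leadingForm_mul,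
      leadingForm_eq_self (isHomogeneous_leadingForm p)]
  rcases eq_or_ne (leadingForm p * c) 0 with h0 | h0
  · exact ⟨0, dvd_zero p, by simp, by simp [h0]⟩
  have hdeg : (p * c).totalDegree = n := by
    rw [← totalDegree_leadingForm, hlead, hq.totalDegree h0]
  exact ⟨p * c, dvd_mul_right p c, hdeg.le, by rw [← hlead, leadingForm, hdeg]⟩

end CommSemiring

theorem isRelPrime_of_isRelPrime_leadingForm [CommRing R] [IsDomain R] {f g : MvPolynomial σ R}
    (h : IsRelPrime (leadingForm f) (leadingForm g)) : IsRelPrime f g := by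
  intro c hcf hcg
  have hunit := h (leadingForm_dvd_leadingForm hcf) (leadingForm_dvd_leadingForm hcg)
  have hdeg : c.totalDegree = 0 := by
    rw [← totalDegree_leadingForm, (isUnit_iff_totalDegree_of_isReduced.mp hunit).2]
  rwa [leadingForm_eq_self ((totalDegree_zero_iff_isHomogeneous σ).mp hdeg)] at hunit

end LeadingForm

section UniqueFactorization

variable {σ R : Type*} [CommRing R] [IsDomain R] [UniqueFactorizationMonoid R]
  {f g u v : MvPolynomial σ R} {n : ℕ}

theorem exists_mul_dvd_totalDegree_le (hfg : IsRelPrime (leadingForm f) (leadingForm g))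
    (hu : f ∣ u) (hv : g ∣ v) (hun : u.totalDegree ≤ n + 1) (hvn : v.totalDegree ≤ n + 1)
    (huv : (u + v).totalDegree ≤ n) :
    ∃ w, f * g ∣ w ∧ (u - w).totalDegree ≤ n ∧ (v + w).totalDegree ≤ n := by
  have hcancel : homogeneousComponent (n + 1) u + homogeneousComponent (n + 1) v = 0 := by
    rw [← map_add, homogeneousComponent_eq_zero _ _ (by lia)]
  have hf := leadingForm_dvd_homogeneousComponent hu hun
  have hg := leadingForm_dvd_homogeneousComponent hv hvn
  rw [eq_neg_of_add_eq_zero_right hcancel, dvd_neg] at hg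
  obtain ⟨w, hw, hwn, hwu⟩ :=
    exists_dvd_homogeneousComponent_eq (homogeneousComponent_isHomogeneous (n + 1) u)
      (leadingForm_mul f g ▸ hfg.mul_dvd hf hg)
  refine ⟨w, hw, totalDegree_le_of_homogeneousComponent_eq_zero ?_ ?_,
    totalDegree_le_of_homogeneousComponent_eq_zero ?_ ?_⟩
  · exact (totalDegree_sub _ _).trans (max_le hun hwn)
  · rw [map_sub, hwu, sub_self]
  · exact (totalDegree_add _ _).trans (max_le hvn hwn)
  · rw [map_add, hwu, add_comm, hcancel]

theorem exists_dvd_add_eq_of_isRelPrime_leadingForm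
    (hfg : IsRelPrime (leadingForm f) (leadingForm g)) {p : MvPolynomial σ R}
    (hp : p ∈ Ideal.span {f, g}) :
    ∃ u v, f ∣ u ∧ g ∣ v ∧ u.totalDegree ≤ p.totalDegree ∧ v.totalDegree ≤ p.totalDegree ∧
      u + v = p := by
  have descend (n : ℕ) : ∀ u v : MvPolynomial σ R, f ∣ u → g ∣ v → u.totalDegree ≤ n →
      v.totalDegree ≤ n → u + v = p → ∃ u v, f ∣ u ∧ g ∣ v ∧ u.totalDegree ≤ p.totalDegree ∧
        v.totalDegree ≤ p.totalDegree ∧ u + v = p := by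
    induction n with
    | zero => exact fun u v hu hv hun hvn huv ↦ ⟨u, v, hu, hv, by lia, by lia, huv⟩
    | succ n ih =>
      intro u v hu hv hun hvn huv
      rcases lt_or_ge n p.totalDegree with hn | hn
      · exact ⟨u, v, hu, hv, by lia, by lia, huv⟩
      obtain ⟨w, hw, hun', hvn'⟩ :=
        exists_mul_dvd_totalDegree_le hfg hu hv hun hvn (huv ▸ hn)
      exact ih (u - w) (v + w) (dvd_sub hu (dvd_of_mul_right_dvd hw))
        (dvd_add hv (dvd_of_mul_left_dvd hw)) hun' hvn' (by rw [← huv]; ring)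
  obtain ⟨a, b, hab⟩ := Ideal.mem_span_pair.mp hp
  exact descend _ _ _ (dvd_mul_left f a) (dvd_mul_left g b) (le_max_left _ _) (le_max_right _ _) hab

end UniqueFactorization

theorem card_finsupp_sum_le {σ : Type*} [Fintype σ] (n : ℕ) :
    Nat.card {s : σ →₀ ℕ | (s.sum fun _ k ↦ k) ≤ n} =
      (n + Fintype.card σ).choose (Fintype.card σ) := by
  classical
  -- An exponent of degree at most `n` is one of degree exactly `n` in one more variable.
  let homogenize : {s : σ →₀ ℕ | (s.sum fun _ k ↦ k) ≤ n} ≃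
      {s : Option σ →₀ ℕ // s.sum (fun _ ↦ id) = n} :=
    { toFun s := ⟨s.1.optionElim (n - s.1.sum fun _ k ↦ k), by
        have := s.2.out
        simp only [Set.mem_ofPred_eq, implies_true, Finsupp.sum_fintype, id_eq,
          Finsupp.optionElim_apply_eq_elim, Fintype.sum_option, Option.elim_none,
          Option.elim_some] at this ⊢
        lia⟩
      invFun s := ⟨s.1.some, by
        have := s.2
        simp only [id_eq, implies_true, Finsupp.sum_fintype, Fintype.sum_option,
          Set.mem_ofPred_eq, Finsupp.some_apply] at this ⊢
        lia⟩
      left_inv s := by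
        ext i; simp
      right_inv s := by
        obtain ⟨s, rfl⟩ := s
        ext (_ | i) <;> simp [Finsupp.sum_fintype, Fintype.sum_option] }
  rw [Nat.card_congr homogenize, ← Nat.card_congr (Sym.equivNatSum _ n),
    Nat.card_eq_fintype_card, Sym.card_sym_eq_choose, Fintype.card_option, Nat.add_right_comm,
    Nat.add_sub_cancel, Nat.add_comm, Nat.choose_symm_add]

theorem finrank_restrictTotalDegree {σ R : Type*} [Fintype σ] [CommRing R] [Nontrivial R]
    (n : ℕ) : Module.finrank R (restrictTotalDegree σ R n) =
      (n + Fintype.card σ).choose (Fintype.card σ) := by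
  refine (Module.finrank_eq_nat_card_basis (basisRestrictSupport R _)).trans ?_
  exact card_finsupp_sum_le n

section DegreeFiltration

variable {σ R : Type*}

/-- The elements of total degree at most `n` of the ideal `I`: the `n`-th step of the degree
filtration of `I`, as a module over the base ring. -/
noncomputable def truncatedIdeal [CommSemiring R] (I : Ideal (MvPolynomial σ R)) (n : ℕ) :
    Submodule R (MvPolynomial σ R) :=
  restrictTotalDegree σ R n ⊓ I.restrictScalars R

theorem mem_truncatedIdeal [CommSemiring R] {I : Ideal (MvPolynomial σ R)} {n : ℕ}
    {p : MvPolynomial σ R} : p ∈ truncatedIdeal I n ↔ p.totalDegree ≤ n ∧ p ∈ I := by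
  rw [truncatedIdeal, Submodule.mem_inf, mem_restrictTotalDegree, Submodule.restrictScalars_mem]

theorem truncatedIdeal_span_singleton_inf [CommSemiring R]
    [DecompositionMonoid (MvPolynomial σ R)] {f g : MvPolynomial σ R}
    (hfg : IsRelPrime f g) (n : ℕ) :
    truncatedIdeal (Ideal.span {f}) n ⊓ truncatedIdeal (Ideal.span {g}) n =
      truncatedIdeal (Ideal.span {f * g}) n := by
  ext p
  simp only [Submodule.mem_inf, mem_truncatedIdeal, Ideal.mem_span_singleton]
  exact ⟨fun ⟨⟨hn, hf⟩, _, hg⟩ ↦ ⟨hn, hfg.mul_dvd hf hg⟩,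
    fun ⟨hn, h⟩ ↦ ⟨⟨hn, dvd_of_mul_right_dvd h⟩, hn, dvd_of_mul_left_dvd h⟩⟩

section IsDomain

variable [CommRing R] [IsDomain R] {f g : MvPolynomial σ R}

theorem truncatedIdeal_span_pair [UniqueFactorizationMonoid R]
    (hfg : IsRelPrime (leadingForm f) (leadingForm g)) (n : ℕ) :
    truncatedIdeal (Ideal.span {f, g}) n =
      truncatedIdeal (Ideal.span {f}) n ⊔ truncatedIdeal (Ideal.span {g}) n := by
  apply le_antisymm
  · intro p hp
    obtain ⟨hpn, hpI⟩ := mem_truncatedIdeal.mp hp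
    obtain ⟨u, v, hfu, hgv, hu, hv, rfl⟩ := exists_dvd_add_eq_of_isRelPrime_leadingForm hfg hpI
    exact Submodule.add_mem_sup
      (mem_truncatedIdeal.mpr ⟨hu.trans hpn, Ideal.mem_span_singleton.mpr hfu⟩)
      (mem_truncatedIdeal.mpr ⟨hv.trans hpn, Ideal.mem_span_singleton.mpr hgv⟩)
  · exact sup_le (inf_le_inf_left _ (Ideal.span_mono (by simp)))
      (inf_le_inf_left _ (Ideal.span_mono (by simp)))

theorem truncatedIdeal_span_singleton (hf : f ≠ 0) (n : ℕ) :
    truncatedIdeal (Ideal.span {f}) (n + f.totalDegree) =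
      (restrictTotalDegree σ R n).map (LinearMap.mulLeft R f) := by
  ext p
  simp only [mem_truncatedIdeal, Ideal.mem_span_singleton, Submodule.mem_map,
    mem_restrictTotalDegree, LinearMap.mulLeft_apply]
  constructor
  · rintro ⟨hn, c, rfl⟩
    rcases eq_or_ne c 0 with rfl | hc
    · exact ⟨0, by simp, rfl⟩
    · exact ⟨c, by rw [totalDegree_mul_of_isDomain hf hc] at hn; lia, rfl⟩
  · rintro ⟨c, hc, rfl⟩
    exact ⟨(totalDegree_mul _ _).trans (by lia), dvd_mul_right f c⟩

theorem finrank_truncatedIdeal_span_singleton (hf : f ≠ 0) (n : ℕ) :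
    Module.finrank R (truncatedIdeal (Ideal.span {f}) (n + f.totalDegree)) =
      Module.finrank R (restrictTotalDegree σ R n) := by
  rw [truncatedIdeal_span_singleton hf]
  exact (Submodule.equivMapOfInjective _ (mul_right_injective₀ hf) _).finrank_eq.symm

end IsDomain

section Field

variable {K : Type*} [Field K] [Finite σ]

instance (I : Ideal (MvPolynomial σ K)) (n : ℕ) : Module.Finite K (truncatedIdeal I n) :=
  Submodule.finiteDimensional_of_le inf_le_left

theorem finrank_truncatedIdeal_span_pair {f g : MvPolynomial σ K} (hf : f ≠ 0)
    (hg : g ≠ 0) (hfg : IsRelPrime (leadingForm f) (leadingForm g)) (n : ℕ) :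
    Module.finrank K (truncatedIdeal (Ideal.span {f, g}) (n + f.totalDegree + g.totalDegree)) +
        Module.finrank K (restrictTotalDegree σ K n) =
      Module.finrank K (restrictTotalDegree σ K (n + g.totalDegree)) +
        Module.finrank K (restrictTotalDegree σ K (n + f.totalDegree)) := by
  rw [← finrank_truncatedIdeal_span_singleton (mul_ne_zero hf hg) n,
    ← finrank_truncatedIdeal_span_singleton hf, ← finrank_truncatedIdeal_span_singleton hg,
    totalDegree_mul_of_isDomain hf hg, ← add_assoc, add_right_comm n g.totalDegree,
    truncatedIdeal_span_pair hfg,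
    ← truncatedIdeal_span_singleton_inf (isRelPrime_of_isRelPrime_leadingForm hfg)]
  exact Submodule.finrank_sup_add_finrank_inf_eq _ _

end Field

end DegreeFiltration

section QuotientDimension

theorem finrank_map_mkQ_add_finrank_inf {K M : Type*} [DivisionRing K] [AddCommGroup M] [Module K M]
    (W V : Submodule K M) [Module.Finite K V] :
    Module.finrank K (V.map W.mkQ) + Module.finrank K (V ⊓ W : Submodule K M) =
      Module.finrank K V := by
  have hrange : LinearMap.range (W.mkQ.domRestrict V) = V.map W.mkQ :=
    LinearMap.range_domRestrict _ _
  have hker : (LinearMap.ker (W.mkQ.domRestrict V)).map V.subtype = V ⊓ W := by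
    rw [LinearMap.ker_domRestrict, Submodule.ker_mkQ, Submodule.map_comap_subtype]
  rw [← hrange, ← hker, Submodule.finrank_map_subtype_eq,
    LinearMap.finrank_range_add_finrank_ker]

theorem choose_two_add_choose_two (n d e : ℕ) :
    (n + d + e + 2).choose 2 + (n + 2).choose 2 =
      (n + e + 2).choose 2 + (n + d + 2).choose 2 + d * e := by
  apply Nat.cast_injective (R := ℚ)
  push_cast [Nat.cast_choose_two]
  ring

variable {K : Type*} [Field K] {f g : MvPolynomial (Fin 2) K}

theorem finrank_map_mkQ_restrictTotalDegree (hf : f ≠ 0) (hg : g ≠ 0)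
    (hfg : IsRelPrime (leadingForm f) (leadingForm g)) (n : ℕ) :
    Module.finrank K ((restrictTotalDegree (Fin 2) K (n + f.totalDegree + g.totalDegree)).map
      ((Ideal.span {f, g}).restrictScalars K).mkQ) = f.totalDegree * g.totalDegree := by
  have hquot := (finrank_map_mkQ_add_finrank_inf ((Ideal.span {f, g}).restrictScalars K)
    (restrictTotalDegree (Fin 2) K (n + f.totalDegree + g.totalDegree))).trans
      (finrank_restrictTotalDegree _)
  have hideal := finrank_truncatedIdeal_span_pair hf hg hfg n
  simp only [finrank_restrictTotalDegree, Fintype.card_fin] at hquot hideal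
  have hchoose := choose_two_add_choose_two n f.totalDegree g.totalDegree
  change _ + Module.finrank K (truncatedIdeal (Ideal.span {f, g}) _) = _ at hquot
  lia

theorem finrank_quotient_span_pair (hf : f ≠ 0) (hg : g ≠ 0)
    (hfg : IsRelPrime (leadingForm f) (leadingForm g)) :
    Module.finrank K (MvPolynomial (Fin 2) K ⧸ Ideal.span {f, g}) =
      f.totalDegree * g.totalDegree := by
  let π := ((Ideal.span {f, g}).restrictScalars K).mkQ
  have hdim := finrank_map_mkQ_restrictTotalDegree hf hg hfg
  have hconst (n : ℕ) : (restrictTotalDegree (Fin 2) K (0 + f.totalDegree + g.totalDegree)).map π =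
      (restrictTotalDegree (Fin 2) K (n + f.totalDegree + g.totalDegree)).map π :=
    Submodule.eq_of_le_of_finrank_eq (Submodule.map_mono fun p hp ↦ by
      rw [mem_restrictTotalDegree] at hp ⊢
      lia) ((hdim 0).trans (hdim n).symm)
  have htop : (restrictTotalDegree (Fin 2) K (0 + f.totalDegree + g.totalDegree)).map π = ⊤ := by
    refine eq_top_iff.mpr fun q _ ↦ ?_
    obtain ⟨p, rfl⟩ := Submodule.mkQ_surjective _ q
    rw [hconst p.totalDegree]
    exact Submodule.mem_map_of_mem ((mem_restrictTotalDegree _ _ _).mpr (by lia))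
  rw [← hdim 0, htop, finrank_top]
  rfl

end QuotientDimension

section BinaryForm

variable {K : Type*} [Field K] [IsAlgClosed K]

theorem exists_eval_eq_zero_of_isHomogeneous {p : MvPolynomial (Fin 2) K} {k : ℕ}
    (hp : p.IsHomogeneous k) (hk : 0 < k) :
    ∃ x y : K, ¬(x = 0 ∧ y = 0) ∧ eval ![x, y] p = 0 := by
  let q : Polynomial K := aeval ![Polynomial.X, 1] p
  have hpq : q.homogenize k = p := Polynomial.homogenize_eq_of_isHomogeneous hp rfl
  rcases Decidable.eq_or_ne q.degree 0 with hq | hq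
  · refine ⟨1, 0, by simp, ?_⟩
    rw [← hpq, Polynomial.eq_C_of_degree_eq_zero hq, Polynomial.homogenize_C]
    simp [hk.ne']
  · obtain ⟨t, ht⟩ := IsAlgClosed.exists_root q hq
    refine ⟨t, 1, by simp, ?_⟩
    have heval : aeval ![t, 1] p = Polynomial.aeval t q := by
      rw [comp_aeval_apply]
      congr 2
      ext i
      fin_cases i <;> simp
    exact heval.trans ht

theorem isRelPrime_of_forall_eval_ne_zero {p q : MvPolynomial (Fin 2) K} {m n : ℕ}
    (hp : p.IsHomogeneous m) (hq : q.IsHomogeneous n)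
    (h : ∀ x y : K, ¬(x = 0 ∧ y = 0) → ¬(eval ![x, y] p = 0 ∧ eval ![x, y] q = 0)) :
    IsRelPrime p q := by
  intro c hcp hcq
  have hlp : leadingForm c ∣ p := leadingForm_eq_self hp ▸ leadingForm_dvd_leadingForm hcp
  have hlq : leadingForm c ∣ q := leadingForm_eq_self hq ▸ leadingForm_dvd_leadingForm hcq
  rcases Nat.eq_zero_or_pos c.totalDegree with hc | hc
  · obtain ⟨a, rfl⟩ : ∃ a, c = C a := ⟨_, totalDegree_eq_zero_iff_eq_C.mp hc⟩
    refine (isUnit_iff_ne_zero.mpr fun ha ↦ h 1 0 (by simp) ?_).map C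
    have hp0 : p = 0 := by simpa [ha] using hcp
    have hq0 : q = 0 := by simpa [ha] using hcq
    simp [hp0, hq0]
  · obtain ⟨x, y, hxy, hzero⟩ :=
      exists_eval_eq_zero_of_isHomogeneous (isHomogeneous_leadingForm c) hc
    have hpzero : eval ![x, y] p = 0 := zero_dvd_iff.mp (hzero ▸ map_dvd _ hlp)
    have hqzero : eval ![x, y] q = 0 := zero_dvd_iff.mp (hzero ▸ map_dvd _ hlq)
    exact (h x y hxy ⟨hpzero, hqzero⟩).elim

end BinaryForm

section LocalMultiplicities

theorem rank_eq_sum_primeSpectrum (K R : Type*) [Field K] [CommRing R] [Algebra K R]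
    [Module.Finite K R] [Fintype (PrimeSpectrum R)] :
    Module.rank K R = ∑ P : PrimeSpectrum R, Module.rank K (Localization.AtPrime P.asIdeal) := by
  have : IsArtinianRing R := .of_finite K R
  rw [← Module.finrank_eq_rank, IsArtinianRing.finrank_eq_sum_primeSpectrum R K, Nat.cast_sum]
  refine Finset.sum_congr rfl fun P _ ↦ ?_
  have : Module.Finite K (Localization.AtPrime P.asIdeal) :=
    .of_surjective (Algebra.algHom K R (Localization.AtPrime P.asIdeal)).toLinearMap
      (IsArtinianRing.localization_surjective P.asIdeal.primeCompl _)
  exact Module.finrank_eq_rank _ _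

variable {A : Type*} [CommRing A] (I : Ideal A)

theorem rank_localizationAtPrime_quotient_map (K : Type*) [CommRing K] [Algebra K A]
    (Q : Ideal (A ⧸ I)) [Q.IsPrime] :
    Module.rank K (Localization.AtPrime (Q.comap (Ideal.Quotient.mk I)) ⧸
      I.map (algebraMap A (Localization.AtPrime (Q.comap (Ideal.Quotient.mk I))))) =
      Module.rank K (Localization.AtPrime Q) := by
  let S := Localization.AtPrime (Q.comap (Ideal.Quotient.mk I))
  have hM : Algebra.algebraMapSubmonoid (A ⧸ I) (Q.comap (Ideal.Quotient.mk I)).primeCompl =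
      Q.primeCompl :=
    Ideal.map_primeCompl_comap_of_surjective _ Ideal.Quotient.mk_surjective Q
  have : IsLocalization Q.primeCompl (S ⧸ I.map (algebraMap A S)) := hM ▸ inferInstance
  have : IsScalarTower K (A ⧸ I) (S ⧸ I.map (algebraMap A S)) := .of_algebraMap_eq fun c ↦
    congrArg (Ideal.Quotient.mk _) (IsScalarTower.algebraMap_apply K A S c)
  exact ((IsLocalization.algEquiv Q.primeCompl (S ⧸ I.map (algebraMap A S))
    (Localization.AtPrime Q)).restrictScalars K).toLinearEquiv.rank_eq

theorem isMaximal_of_mem_zeroLocus [IsArtinianRing (A ⧸ I)] {P : PrimeSpectrum A}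
    (hP : P ∈ PrimeSpectrum.zeroLocus (I : Set A)) : P.asIdeal.IsMaximal := by
  obtain ⟨Q, hQ⟩ := I.primeSpectrumQuotientOrderIsoZeroLocus.surjective ⟨P, hP⟩
  obtain rfl : PrimeSpectrum.comap (Ideal.Quotient.mk I) Q = P := congrArg Subtype.val hQ
  have := IsArtinianRing.isMaximal_of_isPrime Q.asIdeal
  exact Ideal.comap_isMaximal_of_surjective _ Ideal.Quotient.mk_surjective

theorem finite_zeroLocus [IsArtinianRing (A ⧸ I)] :
    (PrimeSpectrum.zeroLocus (I : Set A)).Finite :=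
  Set.finite_coe_iff.mp (Finite.of_equiv _ I.primeSpectrumQuotientOrderIsoZeroLocus.toEquiv)

theorem rank_quotient_eq_sum_zeroLocus (K : Type*) [Field K] [Algebra K A]
    [Module.Finite K (A ⧸ I)] [Fintype (PrimeSpectrum.zeroLocus (I : Set A))] :
    Module.rank K (A ⧸ I) = ∑ P : PrimeSpectrum.zeroLocus (I : Set A),
      Module.rank K (Localization.AtPrime P.1.asIdeal ⧸
        I.map (algebraMap A (Localization.AtPrime P.1.asIdeal))) := by
  let φ := I.primeSpectrumQuotientOrderIsoZeroLocus.toEquiv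
  let := Fintype.ofEquiv _ φ.symm
  calc Module.rank K (A ⧸ I)
      = ∑ Q : PrimeSpectrum (A ⧸ I), Module.rank K (Localization.AtPrime Q.asIdeal) :=
        rank_eq_sum_primeSpectrum K (A ⧸ I)
    _ = ∑ Q, Module.rank K (Localization.AtPrime (φ Q).1.asIdeal ⧸
          I.map (algebraMap A (Localization.AtPrime (φ Q).1.asIdeal))) :=
        Finset.sum_congr rfl fun Q _ ↦ (rank_localizationAtPrime_quotient_map I K Q.asIdeal).symm
    _ = _ := φ.sum_comp fun P ↦ Module.rank K (Localization.AtPrime P.1.asIdeal ⧸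
          I.map (algebraMap A (Localization.AtPrime P.1.asIdeal)))

end LocalMultiplicities

section Points

variable {L : Type} [Field L] {f g : MvPolynomial (Fin 2) L}

/-- The point `p` of the affine plane, as a point of the spectrum of its coordinate ring. -/
noncomputable def ptPrime (p : L × L) : PrimeSpectrum (MvPolynomial (Fin 2) L) :=
  ⟨ptIdeal L p, (ptIdeal_isMaximal L p).isPrime⟩

theorem ptPrime_injective : Function.Injective (ptPrime (L := L)) := by
  intro p q hpq
  have h (i : Fin 2) : ![p.1, p.2] i = ![q.1, q.2] i := by
    have hmem : X i - C (![p.1, p.2] i) ∈ (ptPrime q).asIdeal := by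
      rw [← hpq]
      simp [ptPrime, ptIdeal]
    have : ![q.1, q.2] i - ![p.1, p.2] i = 0 := by simpa [ptPrime, ptIdeal] using hmem
    exact (sub_eq_zero.mp this).symm
  exact Prod.ext (h 0) (h 1)

theorem exists_ptPrime_eq [IsAlgClosed L] {P : PrimeSpectrum (MvPolynomial (Fin 2) L)}
    (hP : P.asIdeal.IsMaximal) : ∃ p, ptPrime p = P := by
  obtain ⟨x, hx⟩ := isMaximal_iff_eq_vanishingIdeal_singleton.mp hP
  have hvec : ![x 0, x 1] = x := by
    ext i
    fin_cases i <;> rfl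
  refine ⟨(x 0, x 1), PrimeSpectrum.ext ?_⟩
  ext q
  simp [hx, ptPrime, ptIdeal, hvec]

theorem ptPrime_mem_zeroLocus_span_pair {p : L × L} :
    ptPrime p ∈ PrimeSpectrum.zeroLocus (Ideal.span {f, g} : Set (MvPolynomial (Fin 2) L)) ↔
      eval ![p.1, p.2] f = 0 ∧ eval ![p.1, p.2] g = 0 := by
  rw [PrimeSpectrum.zeroLocus_span, PrimeSpectrum.mem_zeroLocus, Set.pair_subset_iff]
  rfl

theorem bijOn_ptPrime [IsAlgClosed L]
    [IsArtinianRing (MvPolynomial (Fin 2) L ⧸ Ideal.span {f, g})] :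
    Set.BijOn ptPrime {p : L × L | eval ![p.1, p.2] f = 0 ∧ eval ![p.1, p.2] g = 0}
      (PrimeSpectrum.zeroLocus (Ideal.span {f, g} : Set (MvPolynomial (Fin 2) L))) := by
  refine ⟨fun p ↦ ptPrime_mem_zeroLocus_span_pair.mpr, ptPrime_injective.injOn, fun P hP ↦ ?_⟩
  obtain ⟨p, rfl⟩ := exists_ptPrime_eq (isMaximal_of_mem_zeroLocus _ hP)
  exact ⟨p, ptPrime_mem_zeroLocus_span_pair.mp hP, rfl⟩

theorem interMult_eq_rank_quotient_map (f g : MvPolynomial (Fin 2) L) (p : L × L) :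
    interMult L f g p = Module.rank L (Localization.AtPrime (ptPrime p).asIdeal ⧸
      (Ideal.span {f, g}).map (algebraMap _ (Localization.AtPrime (ptPrime p).asIdeal))) := by
  rw [interMult, ← Set.image_pair, ← Ideal.map_span]
  rfl

theorem finite_setOf_eval_eq_zero [IsAlgClosed L]
    [IsArtinianRing (MvPolynomial (Fin 2) L ⧸ Ideal.span {f, g})] :
    {p : L × L | eval ![p.1, p.2] f = 0 ∧ eval ![p.1, p.2] g = 0}.Finite :=
  bijOn_ptPrime.finite_iff_finite.mpr (finite_zeroLocus _)

theorem sum_interMult_eq_rank [IsAlgClosed L]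
    [Module.Finite L (MvPolynomial (Fin 2) L ⧸ Ideal.span {f, g})]
    (hfin : {p : L × L | eval ![p.1, p.2] f = 0 ∧ eval ![p.1, p.2] g = 0}.Finite) :
    ∑ p ∈ hfin.toFinset, interMult L f g p =
      Module.rank L (MvPolynomial (Fin 2) L ⧸ Ideal.span {f, g}) := by
  have : IsArtinianRing (MvPolynomial (Fin 2) L ⧸ Ideal.span {f, g}) := .of_finite L _
  let := hfin.fintype
  let := (finite_zeroLocus (Ideal.span {f, g})).fintype
  rw [rank_quotient_eq_sum_zeroLocus, Finset.sum_subtype _ fun p ↦ hfin.mem_toFinset,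
    ← bijOn_ptPrime.equiv.sum_comp]
  exact Finset.sum_congr rfl fun p _ ↦ interMult_eq_rank_quotient_map f g p

end Points

/-- **Non-standard Bezout theorem** (affine form): if `f, g ∈ L[x,y]` are nonconstant of
total degrees `d` and `e`, and their top-degree homogeneous components have no common zero
in `L² \ {0}` (no common point at infinity), then the curves `f = 0` and `g = 0` meet in
finitely many points and the sum of the intersection multiplicities is `d·e`. -/
theorem nonstandard_bezout (L : Type) [Field L] [IsAlgClosed L]
    (f g : MvPolynomial (Fin 2) L) (d e : ℕ) (hd : f.totalDegree = d) (he : g.totalDegree = e)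
    (hd1 : 0 < d) (he1 : 0 < e)
    (hinf : ∀ x y : L, ¬(x = 0 ∧ y = 0) →
      ¬(eval ![x, y] (homogeneousComponent d f) = 0 ∧
        eval ![x, y] (homogeneousComponent e g) = 0)) :
    ∃ hfin : {p : L × L | eval ![p.1, p.2] f = 0 ∧ eval ![p.1, p.2] g = 0}.Finite,
      ∑ p ∈ hfin.toFinset, interMult L f g p = (d : Cardinal) * (e : Cardinal) := by
  subst hd he
  have hf : f ≠ 0 := by rintro rfl; simp at hd1
  have hg : g ≠ 0 := by rintro rfl; simp at he1
  have hfg : IsRelPrime (leadingForm f) (leadingForm g) :=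
    isRelPrime_of_forall_eval_ne_zero (isHomogeneous_leadingForm f) (isHomogeneous_leadingForm g)
      hinf
  have hdim := finrank_quotient_span_pair hf hg hfg
  have : Module.Finite L (MvPolynomial (Fin 2) L ⧸ Ideal.span {f, g}) :=
    Module.finite_of_finrank_pos (hdim ▸ Nat.mul_pos hd1 he1)
  have : IsArtinianRing (MvPolynomial (Fin 2) L ⧸ Ideal.span {f, g}) := .of_finite L _
  refine ⟨finite_setOf_eval_eq_zero, ?_⟩
  rw [sum_interMult_eq_rank, ← Module.finrank_eq_rank, hdim, Nat.cast_mul]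
end

section
/- Let A be a commutative ring and B an étale A-algebra (formally étale and of finite presentation). Then for every prime ideal q of B there exist an element g ∈ B with g ∉ q, a monic polynomial f ∈ A[T], and a polynomial h ∈ A[T], such that the image of the derivative f′ is a unit in the localization ((A[T]/(f)))_{h̄} (where h̄ denotes the image of h in A[T]/(f)), and there is an A-algebra isomorphism B_g ≅ ((A[T]/(f)))_{h̄}. -/
universe u

/-!
Zariski's main theorem reduces an algebra of finite presentation that is étale at `q` to a finite
one, where a primitive element of the residue field extension at `q` gives rise to a standard étale
presentation of `B_g` for some `g ∉ q`. A standard étale pair `(f, h)` satisfies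
`f' * p₁ + f * p₂ = h ^ n`; in `(A[T]/(f))_h` the element `f` vanishes and `h` is a unit, so `f'`
divides a unit.
-/

open Polynomial

section StandardEtale

variable {R S : Type*} [CommRing R] [CommRing S] [Algebra R S]

theorem isUnit_map_derivative_of_standardEtalePair (P : StandardEtalePair R) (φ : R[X] →ₐ[R] S)
    (map_f : φ P.f = 0) (map_g : IsUnit (φ P.g)) : IsUnit (φ (derivative P.f)) := by
  have aeval_eq (p : R[X]) : aeval (φ X) p = φ p := by rw [aeval_algHom_apply, aeval_X_left_apply]
  have hasMap : P.HasMap (φ X) := ⟨by rwa [aeval_eq], by rwa [aeval_eq]⟩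
  simpa only [aeval_eq] using hasMap.isUnit_derivative_f

theorem isUnit_algebraMap_derivative_away (P : StandardEtalePair R) :
    IsUnit (algebraMap (R[X] ⧸ Ideal.span {P.f})
      (Localization.Away (Ideal.Quotient.mk (Ideal.span {P.f}) P.g))
      (Ideal.Quotient.mk (Ideal.span {P.f}) (derivative P.f))) := by
  let mkₐ := Ideal.Quotient.mkₐ R (Ideal.span {P.f})
  let toAway := Algebra.algHom R (R[X] ⧸ Ideal.span {P.f})
    (Localization.Away (Ideal.Quotient.mk (Ideal.span {P.f}) P.g))
  have map_f : (toAway.comp mkₐ) P.f = 0 := by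
    simp [mkₐ, Ideal.Quotient.mk_singleton_self]
  have map_g : IsUnit ((toAway.comp mkₐ) P.g) :=
    IsLocalization.Away.algebraMap_isUnit (Ideal.Quotient.mk (Ideal.span {P.f}) P.g)
  exact isUnit_map_derivative_of_standardEtalePair P (toAway.comp mkₐ) map_f map_g

theorem exists_algEquiv_away_quotient_of_isStandardEtale [Algebra.IsStandardEtale R S] :
    ∃ f h : R[X], f.Monic ∧
      IsUnit (algebraMap (R[X] ⧸ Ideal.span {f})
        (Localization.Away (Ideal.Quotient.mk (Ideal.span {f}) h))
        (Ideal.Quotient.mk (Ideal.span {f}) (derivative f))) ∧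
      Nonempty (S ≃ₐ[R] Localization.Away (Ideal.Quotient.mk (Ideal.span {f}) h)) := by
  obtain ⟨⟨P⟩⟩ := ‹Algebra.IsStandardEtale R S›
  -- `AdjoinRoot P.f` unfolds to `R[X] ⧸ Ideal.span {P.f}`.
  exact ⟨P.f, P.g, P.monic_f, isUnit_algebraMap_derivative_away P.P,
    ⟨P.equivRing.trans P.P.equivAwayAdjoinRoot⟩⟩

end StandardEtale

theorem toAlgebra_algebraMap_comp_algebraMap (R S T : Type*) [CommSemiring R] [CommSemiring S]
    [CommSemiring T] [Algebra R S] [Algebra S T] [inst : Algebra R T] [IsScalarTower R S T] :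
    ((algebraMap S T).comp (algebraMap R S)).toAlgebra = inst :=
  Algebra.algebra_ext _ _ fun r ↦ (IsScalarTower.algebraMap_apply R S T r).symm

theorem etale_locally_standard_etale_general {A B : Type*} [CommRing A] [CommRing B] [Algebra A B]
    [Algebra.FinitePresentation A B] (q : Ideal B) [q.IsPrime] [Algebra.IsEtaleAt A q] :
    ∃ (g : B) (f h : A[X]),
      g ∉ q ∧ f.Monic ∧
      IsUnit (algebraMap (A[X] ⧸ Ideal.span {f})
        (Localization.Away (Ideal.Quotient.mk (Ideal.span {f}) h))
        (Ideal.Quotient.mk (Ideal.span {f}) (derivative f))) ∧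
      Nonempty (Localization.Away g ≃ₐ[A]
        Localization.Away (Ideal.Quotient.mk (Ideal.span {f}) h)) := by
  obtain ⟨g, hgq, _⟩ := Algebra.IsEtaleAt.exists_isStandardEtale (R := A) q
  obtain ⟨f, h, hf, hunit, he⟩ :=
    exists_algEquiv_away_quotient_of_isStandardEtale (R := A) (S := Localization.Away g)
  exact ⟨g, f, h, hgq, hf, hunit, he⟩

/-- Local structure theorem for étale algebras (Fact 1.5): if `B` is an étale `A`-algebra,
then for every prime `q` of `B` there are `g ∈ B \ q`, a monic polynomial `f ∈ A[T]` and a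
polynomial `h ∈ A[T]` such that `f'` becomes a unit in `((A[T]/(f)))_{h̄}` and
`B_g ≅ ((A[T]/(f)))_{h̄}` as `A`-algebras (i.e. `B` is locally standard étale). -/
theorem etale_locally_standard_etale (A B : Type u) [CommRing A] [CommRing B] [Algebra A B]
    [Algebra.Etale A B] (q : Ideal B) [q.IsPrime] :
    ∃ (g : B) (f h : Polynomial A),
      g ∉ q ∧ f.Monic ∧
      IsUnit ((algebraMap (Polynomial A ⧸ Ideal.span {f})
          (Localization.Away (Ideal.Quotient.mk (Ideal.span {f}) h)))
          (Ideal.Quotient.mk (Ideal.span {f}) (Polynomial.derivative f))) ∧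
      (letI : Algebra A (Localization.Away g) :=
          ((algebraMap B (Localization.Away g)).comp (algebraMap A B)).toAlgebra
       letI : Algebra A (Localization.Away (Ideal.Quotient.mk (Ideal.span {f}) h)) :=
          ((algebraMap (Polynomial A ⧸ Ideal.span {f})
              (Localization.Away (Ideal.Quotient.mk (Ideal.span {f}) h))).comp
            (algebraMap A (Polynomial A ⧸ Ideal.span {f}))).toAlgebra
       Nonempty (Localization.Away g ≃ₐ[A]
          Localization.Away (Ideal.Quotient.mk (Ideal.span {f}) h))) := by
  have : Algebra.IsEtaleAt A q := Algebra.FormallyEtale.comp A B (Localization.AtPrime q)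
  obtain ⟨g, f, h, hgq, hf, hunit, he⟩ := etale_locally_standard_etale_general (A := A) q
  exact ⟨g, f, h, hgq, hf, hunit,
    by rwa [toAlgebra_algebraMap_comp_algebraMap, toAlgebra_algebraMap_comp_algebraMap]⟩
end

section
/- Let L be an algebraically closed field and K an algebraically closed field extension of L. Let d, e ≥ 1, and let t ∈ L[X,Y,Z] be a nonzero squarefree homogeneous polynomial of degree e (defining a reduced projective plane curve). Let (u_α) be a family of elements of K, indexed by the monomials α of degree d in X, Y, Z, which is algebraically independent over L, and set s = ∑_α u_α·α ∈ K[X,Y,Z]. Then for every nonzero point p ∈ K³ with s(p) = 0 and t(p) = 0, the gradient vectors (∂s/∂X(p), ∂s/∂Y(p), ∂s/∂Z(p)) and (∂t/∂X(p), ∂t/∂Y(p), ∂t/∂Z(p)) are linearly independent over K. In particular, every intersection point of the curves s = 0 and t = 0 is a smooth point of both curves and the intersection there is transverse. -/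
open MvPolynomial

/-!
Normalise a coordinate `p i = 1` and let `F = k(p)`. If the gradients of `s` and `t` at `p` are
proportional and that of `t` is nonzero, then `s(p) = 0` and the vanishing of the derivatives of `s`
at `p` along all `v` with `v i = 0` and `v ⬝ᵥ ∇t(p) = 0` are independent linear relations over `F`
between the coefficients of `s`. Quantities that are algebraically independent over `k` satisfy at
most `trdeg k F` independent linear relations over `F`; hence, in `n` variables,
`n - 1 ≤ trdeg k F`. But the homogeneous equation `t(p) = 0` forces `trdeg k F ≤ n - 2`.

The gradient of `t` does not vanish when `n = 3`: the singular locus of a reduced curve over a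
perfect field has codimension at least one in the curve, so at a singular point `trdeg k F = 0`,
whereas the single relation `s(p) = 0` already gives `1 ≤ trdeg k F`.
-/

universe u v w

/-! ### Transcendence degree of quotients and of generated fields -/

section TranscendenceDegree

open Cardinal Algebra

section Ring

variable {R : Type u} [CommRing R] [Nontrivial R]

theorem not_isTranscendenceBasis_of_algebraicIndependent_comp {ι A B : Type*} [CommRing A]
    [CommRing B] [NoZeroDivisors A] [Algebra R A] [Algebra R B] (f : A →ₐ[R] B)
    (hf : ¬ Function.Injective f) {x : ι → A} (hx : AlgebraicIndependent R (f ∘ x)) :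
    ¬ IsTranscendenceBasis R x := by
  intro hbasis
  obtain ⟨a, hfa, ha⟩ : ∃ a, f a = 0 ∧ a ≠ 0 := by
    simpa [injective_iff_map_eq_zero] using hf
  have := hbasis.isAlgebraic
  -- `a`, being algebraic over `R[x]`, divides a nonzero element of `R[x]`, and `f` kills both.
  obtain ⟨⟨r, hr⟩, hr0, har⟩ := (Algebra.IsAlgebraic.isAlgebraic
    (R := adjoin R (Set.range x)) a).exists_nonzero_dvd (mem_nonZeroDivisors_of_ne_zero ha)
  rw [adjoin_range_eq_range_aeval] at hr
  obtain ⟨q, rfl⟩ := hr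
  have hfq : aeval (f ∘ x) q = 0 := by
    rw [show f ∘ x = fun i ↦ f (x i) from rfl, ← comp_aeval_apply]
    simpa [hfa] using map_dvd f har
  exact hr0 (Subtype.ext (by simp [hx.eq_zero_of_aeval_eq_zero q hfq]))

theorem trdeg_lt_of_surjective_of_not_injective {A B : Type v} [CommRing A] [CommRing B]
    [NoZeroDivisors A] [NoZeroDivisors B] [Algebra R A] [Algebra R B] [FaithfulSMul R B]
    (f : A →ₐ[R] B) (hsurj : Function.Surjective f) (hinj : ¬ Function.Injective f)
    (hA : trdeg R A < ℵ₀) : trdeg R B < trdeg R A := by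
  obtain ⟨ι, y, hy⟩ := exists_isTranscendenceBasis' R B
  choose x hx using fun i ↦ hsurj (y i)
  have hfx : AlgebraicIndependent R (f ∘ x) := by
    simpa only [show f ∘ x = y from funext hx] using hy.1
  by_contra! hle
  refine not_isTranscendenceBasis_of_algebraicIndependent_comp f hinj hfx
    ((hfx.of_comp f).isTranscendenceBasis_of_lift_trdeg_le hA ?_)
  rw [hy.lift_cardinalMk_eq_trdeg]
  exact Cardinal.lift_le.2 hle

end Ring

theorem trdeg_adjoin_le_cardinalMk (R : Type u) {A : Type v} [CommRing R] [IsDomain R]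
    [CommRing A] [Algebra R A] (s : Set A) : trdeg R (Algebra.adjoin R s) ≤ #s := by
  rw [← Subtype.range_coe (s := s), adjoin_range_eq_range_aeval, Subtype.range_coe,
    ← Cardinal.lift_le.{max u v}]
  simpa using lift_trdeg_le_of_surjective (aeval ((↑) : s → A)).rangeRestrict
    (aeval (R := R) ((↑) : s → A)).rangeRestrict_surjective

variable {k : Type u} [Field k]

theorem trdeg_quotient_add_one_le {S : Type v} [CommRing S] [Algebra k S] [FiniteType k S]
    {I J : Ideal S} [I.IsPrime] [J.IsPrime] (hIJ : I < J) :
    trdeg k (S ⧸ J) + 1 ≤ trdeg k (S ⧸ I) := by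
  refine Cardinal.add_one_le_of_lt (trdeg_lt_of_surjective_of_not_injective
    (Ideal.Quotient.factorₐ k hIJ.le) (Ideal.Quotient.factor_surjective hIJ.le) (fun hinj ↦ ?_)
    trdeg_lt_aleph0_of_finiteType)
  obtain ⟨a, haJ, haI⟩ := SetLike.exists_of_lt hIJ
  refine haI (Ideal.Quotient.eq_zero_iff_mem.1 (hinj ?_))
  simpa using Ideal.Quotient.eq_zero_iff_mem.2 haJ

theorem trdeg_mvPolynomial_quotient_bot {σ : Type w} [Finite σ] :
    trdeg k (MvPolynomial σ k ⧸ (⊥ : Ideal (MvPolynomial σ k))) = Nat.card σ := by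
  rw [(AlgEquiv.quotientBot k (MvPolynomial σ k)).trdeg_eq, MvPolynomial.trdeg_of_isDomain]
  simp [Nat.cast_card]

variable {K : Type v} [Field K] [Algebra k K]

open scoped IntermediateField.algebraAdjoinAdjoin in
theorem lift_trdeg_adjoin_range {σ : Type w} (p : σ → K) :
    lift.{max w u} (trdeg k (IntermediateField.adjoin k (Set.range p))) =
      lift.{v} (trdeg k (MvPolynomial σ k ⧸ RingHom.ker (aeval p : _ →ₐ[k] K))) := by
  have h := trdeg_add_eq k (Algebra.adjoin k (Set.range p))
    (A := IntermediateField.adjoin k (Set.range p))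
  rw [trdeg_eq_zero (R := Algebra.adjoin k (Set.range p)), add_zero] at h
  rw [← h, adjoin_range_eq_range_aeval]
  simpa using (Ideal.quotientKerEquivRange (aeval p : _ →ₐ[k] K)).symm.lift_trdeg_eq

/-! ### Linear relations between algebraically independent elements -/

theorem cardinalMk_le_trdeg_add_rank_span (F : IntermediateField k K) {s : Set K}
    (hs : AlgebraicIndepOn k id s) :
    #s ≤ trdeg k F + Module.rank F (Submodule.span F s) := by
  obtain ⟨b, -, hspan, hb⟩ := exists_linearIndependent F s
  have hsb : ∀ x : s, (x : K) ∈ Algebra.adjoin F b := fun x ↦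
    span_le_adjoin F b (hspan ▸ Submodule.subset_span x.2)
  have hA : AlgebraicIndependent k (fun x : s ↦ (⟨x, hsb x⟩ : Algebra.adjoin F b)) :=
    AlgebraicIndependent.of_comp ((Algebra.adjoin F b).val.restrictScalars k) hs
  have : FaithfulSMul F (Algebra.adjoin F b) :=
    (faithfulSMul_iff_algebraMap_injective ..).2 (algebraMap F _).injective
  calc #s ≤ trdeg k (Algebra.adjoin F b) := hA.cardinalMk_le_trdeg
    _ = trdeg k F + trdeg F (Algebra.adjoin F b) := (trdeg_add_eq k F).symm
    _ ≤ trdeg k F + Module.rank F (Submodule.span F s) := by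
      rw [← hspan, rank_span_set hb]
      gcongr
      exact trdeg_adjoin_le_cardinalMk F b

theorem finrank_ker_linearCombination_le_trdeg (F : IntermediateField k K) {ι : Type w}
    [Fintype ι] {u : ι → K} (hu : AlgebraicIndependent k u) :
    (Module.finrank F (Fintype.linearCombination F u).ker : Cardinal) ≤ trdeg k F := by
  have hmk : #(Set.range u) = Fintype.card ι := by
    simpa using mk_range_eq_of_injective hu.injective
  have hcard := cardinalMk_le_trdeg_add_rank_span F hu.to_subtype_range
  rw [hmk, ← Fintype.range_linearCombination, ← Module.finrank_eq_rank,
    ← Module.finrank_fintype_fun_eq_card F,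
    ← (Fintype.linearCombination F u).finrank_range_add_finrank_ker, Nat.cast_add,
    add_comm] at hcard
  exact (add_nat_le_add_nat_iff _).1 hcard

end TranscendenceDegree

/-! ### Singular points of squarefree polynomials -/

section Squarefree

variable {R σ : Type*} [CommRing R] [IsDomain R]

theorem dvd_of_pderiv_eq_zero (n : ℕ) [CharP R n] {f : MvPolynomial σ R} {i : σ}
    (hf : pderiv i f = 0) {α : σ →₀ ℕ} (hα : α ∈ f.support) : n ∣ α i := by
  rcases eq_or_ne (α i) 0 with h0 | h0
  · simp [h0]
  have h := congrArg (coeff (α - Finsupp.single i 1)) hf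
  rw [coeff_pderiv, coeff_zero,
    tsub_add_cancel_of_le (by simpa [Nat.one_le_iff_ne_zero] using h0)] at h
  have hcast := (mul_eq_zero.1 h).resolve_left (mem_support_iff.1 hα)
  rw [Finsupp.tsub_apply, Finsupp.single_eq_same] at hcast
  rw [← CharP.cast_eq_zero_iff R n]
  simpa [Nat.cast_sub (Nat.one_le_iff_ne_zero.2 h0)] using hcast

theorem exists_expand_eq_of_pderiv_eq_zero (n : ℕ) [CharP R n] {f : MvPolynomial σ R}
    (hf : ∀ i, pderiv i f = 0) : ∃ g, expand n g = f := by
  change f ∈ (expand n).range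
  rw [f.as_sum]
  refine Subalgebra.sum_mem _ fun α hα ↦ ?_
  have hα' : n • α.mapRange (· / n) (Nat.zero_div n) = α :=
    Finsupp.ext fun i ↦ Nat.mul_div_cancel' (dvd_of_pderiv_eq_zero n (hf i) hα)
  exact ⟨monomial _ _, (expand_monomial n _ _).trans (by rw [hα'])⟩

theorem not_dvd_pderiv_of_ne_zero {q : MvPolynomial σ R} {i : σ} (hq : pderiv i q ≠ 0) :
    ¬ q ∣ pderiv i q := by
  rintro ⟨r, hr⟩
  have hdeg : ∀ α ∈ (pderiv i q).support, α i < q.degreeOf i := fun α hα ↦ by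
    rw [mem_support_iff, coeff_pderiv] at hα
    simpa using monomial_le_degreeOf i (mem_support_iff.2 (left_ne_zero_of_mul hα))
  obtain ⟨α, hα⟩ := support_nonempty.2 hq
  have hlt := (degreeOf_lt_iff (Nat.zero_lt_of_lt (hdeg α hα))).2 hdeg
  have hqr : q * r ≠ 0 := hr ▸ hq
  rw [hr, degreeOf_mul_eq (left_ne_zero_of_mul hqr) (right_ne_zero_of_mul hqr)] at hlt
  lia

variable {k : Type*} [Field k] [PerfectField k]

theorem exists_pderiv_ne_zero_of_irreducible {q : MvPolynomial σ k} (hq : Irreducible q) :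
    ∃ i, pderiv i q ≠ 0 := by
  by_contra! hq0
  obtain ⟨p, _⟩ := CharP.exists k
  obtain ⟨g, rfl⟩ := exists_expand_eq_of_pderiv_eq_zero p hq0
  rcases CharP.char_is_prime_or_zero k p with hp | rfl
  · have := Fact.mk hp
    have : ExpChar k p := .prime hp
    -- Over a perfect field, a polynomial in the `p`-th powers of the variables is a `p`-th power.
    obtain ⟨h, rfl⟩ := MvPolynomial.map_surjective (frobenius k p) (surjective_frobenius k p) g
    rw [← map_expand, map_frobenius_expand] at hq
    exact not_irreducible_pow hp.ne_one hq
  · -- `expand 0 g` is the constant `g(1, …, 1)`.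
    rw [expand_zero_apply] at hq
    have hc : eval 1 g ≠ 0 := fun h ↦ hq.ne_zero (by rw [h, map_zero])
    exact hq.not_isUnit (hc.isUnit.map C)

theorem exists_prime_dvd_mem {S : Type*} [CommRing S] [UniqueFactorizationMonoid S]
    {I : Ideal S} [I.IsPrime] {t : S} (ht0 : t ≠ 0) (ht : t ∈ I) :
    ∃ q, Prime q ∧ q ∣ t ∧ q ∈ I := by
  have hI : (UniqueFactorizationMonoid.factors t).prod ∈ I :=
    (Ideal.mem_iff_of_associated (UniqueFactorizationMonoid.factors_prod ht0)).2 ht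
  obtain ⟨q, hq, hqI⟩ := (Ideal.IsPrime.multiset_prod_mem_iff_exists_mem ‹_› _).1 hI
  exact ⟨q, UniqueFactorizationMonoid.prime_of_factor q hq,
    UniqueFactorizationMonoid.dvd_of_mem_factors hq, hqI⟩

theorem exists_span_singleton_lt_of_squarefree {t : MvPolynomial σ k} (ht0 : t ≠ 0)
    (htsf : Squarefree t) {I : Ideal (MvPolynomial σ k)} [I.IsPrime] (ht : t ∈ I)
    (htI : ∀ i, pderiv i t ∈ I) : ∃ q, Prime q ∧ Ideal.span {q} < I := by
  obtain ⟨q, hq, ⟨m, rfl⟩, hqI⟩ := exists_prime_dvd_mem ht0 ht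
  obtain ⟨i, hi⟩ := exists_pderiv_ne_zero_of_irreducible hq.irreducible
  refine ⟨q, hq, SetLike.lt_iff_le_and_exists.2
    ⟨(Ideal.span_singleton_le_iff_mem I).2 hqI, pderiv i q * m, ?_, fun h ↦ ?_⟩⟩
  · have hmem := htI i
    rw [pderiv_mul] at hmem
    exact (I.add_mem_iff_left (I.mul_mem_right _ hqI)).1 hmem
  · rcases hq.dvd_or_dvd (Ideal.mem_span_singleton.1 h) with h | h
    · exact not_dvd_pderiv_of_ne_zero hi h
    · exact hq.not_isUnit (htsf q (mul_dvd_mul_left q h))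

end Squarefree

/-! ### Field of definition of a point of a projective hypersurface -/

theorem aeval_mul_left_of_isHomogeneous {R A σ : Type*} [CommSemiring R] [CommSemiring A]
    [Algebra R A] {n : ℕ} {f : MvPolynomial σ R} (hf : f.IsHomogeneous n) (a : A) (b : σ → A) :
    aeval (fun j ↦ a * b j) f = a ^ n * aeval b f := by
  simp only [aeval_def, eval₂_eq, Finset.mul_sum, mul_pow, Finset.prod_mul_distrib,
    Finset.prod_pow_eq_pow_sum]
  refine Finset.sum_congr rfl fun α hα ↦ ?_
  rw [show ∑ j ∈ α.support, α j = n from (hf.degree_eq_sum_deg_support hα).symm]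
  ring

section ProjectivePoint

open Cardinal Algebra

variable {k : Type u} [Field k] {K : Type v} [Field K] [Algebra k K] {σ : Type w}

variable (k) in
/-- The homogeneous prime ideal of the projective point `[p]`: the kernel of evaluation at the
generic point `T • p` of the line spanned by `p`. -/
noncomputable def coneIdeal (p : σ → K) : Ideal (MvPolynomial σ k) :=
  RingHom.ker
    (aeval fun j ↦ (Polynomial.X : Polynomial K) * Polynomial.C (p j) : _ →ₐ[k] Polynomial K)

instance coneIdeal_isPrime (p : σ → K) : (coneIdeal k p).IsPrime := RingHom.ker_isPrime _

theorem mem_coneIdeal_of_isHomogeneous {p : σ → K} {n : ℕ} {f : MvPolynomial σ k}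
    (hf : f.IsHomogeneous n) (hfp : aeval p f = 0) : f ∈ coneIdeal k p := by
  have hC : aeval (fun j ↦ Polynomial.C (p j)) f = Polynomial.C (aeval p f) :=
    (comp_aeval_apply p (Polynomial.CAlgHom (R := k) (A := K)) f).symm
  rw [coneIdeal, RingHom.mem_ker, aeval_mul_left_of_isHomogeneous hf, hC, hfp, map_zero, mul_zero]

theorem coneIdeal_lt_ker_aeval {p : σ → K} {i : σ} (hpi : p i = 1) :
    coneIdeal k p < RingHom.ker (aeval p : _ →ₐ[k] K) := by
  refine SetLike.lt_iff_le_and_exists.2 ⟨fun f hf ↦ ?_, X i - 1, ?_, ?_⟩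
  · have hf1 := congrArg ((Polynomial.aeval (1 : K)).restrictScalars k) hf
    rw [comp_aeval_apply] at hf1
    simpa using hf1
  · simp [hpi]
  · simpa [coneIdeal, hpi] using Polynomial.X_sub_C_ne_zero (1 : K)

variable [Finite σ] {p : σ → K} {i : σ} {e : ℕ} {t : MvPolynomial σ k}

theorem trdeg_adjoin_range_add_one_add_le (hpi : p i = 1) {n : ℕ}
    (h : trdeg k (MvPolynomial σ k ⧸ coneIdeal k p) + n ≤ Nat.card σ) :
    trdeg k (IntermediateField.adjoin k (Set.range p)) + 1 + n ≤ Nat.card σ := by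
  have := RingHom.ker_isPrime (aeval p : MvPolynomial σ k →ₐ[k] K)
  have hker :=
    (add_le_add_left (trdeg_quotient_add_one_le (k := k) (coneIdeal_lt_ker_aeval hpi)) _).trans h
  rw [← Cardinal.lift_le.{max w u}]
  simpa [lift_trdeg_adjoin_range] using Cardinal.lift_le.{v}.2 hker

theorem trdeg_adjoin_range_add_two_le (hpi : p i = 1) (ht0 : t ≠ 0) (ht : t.IsHomogeneous e)
    (htp : aeval p t = 0) :
    trdeg k (IntermediateField.adjoin k (Set.range p)) + 2 ≤ Nat.card σ := by
  have hcone : (⊥ : Ideal (MvPolynomial σ k)) < coneIdeal k p :=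
    ((Submodule.ne_bot_iff _).2 ⟨t, mem_coneIdeal_of_isHomogeneous ht htp, ht0⟩).bot_lt
  have h := trdeg_quotient_add_one_le (k := k) hcone
  rw [trdeg_mvPolynomial_quotient_bot] at h
  simpa [add_assoc, one_add_one_eq_two] using
    trdeg_adjoin_range_add_one_add_le hpi (n := 1) (by simpa using h)

theorem trdeg_adjoin_range_add_three_le [PerfectField k] (hpi : p i = 1) (ht0 : t ≠ 0)
    (htsf : Squarefree t) (ht : t.IsHomogeneous e) (htp : aeval p t = 0)
    (htp' : ∀ j, aeval p (pderiv j t) = 0) :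
    trdeg k (IntermediateField.adjoin k (Set.range p)) + 3 ≤ Nat.card σ := by
  obtain ⟨q, hq, hqcone⟩ := exists_span_singleton_lt_of_squarefree ht0 htsf
    (mem_coneIdeal_of_isHomogeneous ht htp)
    fun j ↦ mem_coneIdeal_of_isHomogeneous ht.pderiv (htp' j)
  have : (Ideal.span {q}).IsPrime := (Ideal.span_singleton_prime hq.ne_zero).2 hq
  have hbot : (⊥ : Ideal (MvPolynomial σ k)) < Ideal.span {q} :=
    bot_lt_iff_ne_bot.2 (by simpa using hq.ne_zero)
  have hcone := (add_le_add_left (trdeg_quotient_add_one_le (k := k) hqcone) 1).trans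
    (trdeg_quotient_add_one_le hbot)
  rw [trdeg_mvPolynomial_quotient_bot, add_assoc, one_add_one_eq_two] at hcone
  have h := trdeg_adjoin_range_add_one_add_le hpi (n := 2) (by simpa using hcone)
  rwa [add_assoc, show (1 : Cardinal) + (2 : ℕ) = 3 by norm_num] at h

end ProjectivePoint

/-! ### Gradients and first-order conditions on forms -/

section Gradient

variable {R S σ : Type*} [CommSemiring R] [CommSemiring S]

/-- The gradient of the polynomial `f` at the point `p`, formed with formal partial derivatives. -/
noncomputable def gradientAt (p : σ → R) (f : MvPolynomial σ R) : σ → R :=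
  fun j ↦ eval p (pderiv j f)

theorem gradientAt_map (φ : R →+* S) (p : σ → R) (f : MvPolynomial σ R) :
    gradientAt (φ ∘ p) (map φ f) = φ ∘ gradientAt p f := by
  ext j
  simp [gradientAt, pderiv_map, map_eval]

theorem gradientAt_add (p : σ → R) (f g : MvPolynomial σ R) :
    gradientAt p (f + g) = gradientAt p f + gradientAt p g := by
  ext; simp [gradientAt]

theorem gradientAt_const_smul (p : σ → R) (a : R) (f : MvPolynomial σ R) :
    gradientAt p (a • f) = a • gradientAt p f := by
  ext; simp [gradientAt]

theorem gradientAt_mul (p : σ → R) (f g : MvPolynomial σ R) :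
    gradientAt p (f * g) = eval p f • gradientAt p g + eval p g • gradientAt p f := by
  ext; simp [gradientAt]

theorem gradientAt_X [DecidableEq σ] (p : σ → R) (i : σ) :
    gradientAt p (X i) = Pi.single i 1 := by
  ext j
  rcases eq_or_ne j i with rfl | hj <;> simp [gradientAt, *]

theorem gradientAt_X_pow [DecidableEq σ] (p : σ → R) (i : σ) (n : ℕ) :
    gradientAt p (X i ^ n) = (n * p i ^ (n - 1)) • Pi.single i 1 := by
  rw [← gradientAt_X p i]
  ext; simp [gradientAt, mul_assoc]

theorem eval_smul_of_isHomogeneous {n : ℕ} {f : MvPolynomial σ R} (hf : f.IsHomogeneous n)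
    (a : R) (p : σ → R) : eval (a • p) f = a ^ n * eval p f :=
  aeval_mul_left_of_isHomogeneous hf a p

theorem gradientAt_smul_of_isHomogeneous {n : ℕ} {f : MvPolynomial σ R} (hf : f.IsHomogeneous n)
    (a : R) (p : σ → R) : gradientAt (a • p) f = a ^ (n - 1) • gradientAt p f :=
  funext fun _ ↦ eval_smul_of_isHomogeneous hf.pderiv a p

variable [Fintype σ]

/-- The functional `f ↦ c * f(p) + ∂ᵥ f(p)` on polynomials, bilinearly in `(c, v)` and `f`. -/
noncomputable def firstOrderEval (p : σ → R) : R × (σ → R) →ₗ[R] MvPolynomial σ R →ₗ[R] R :=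
  LinearMap.mk₂ R (fun x f ↦ x.1 * eval p f + x.2 ⬝ᵥ gradientAt p f)
    (fun x y f ↦ by simp only [Prod.fst_add, Prod.snd_add, add_dotProduct]; ring)
    (fun a x f ↦ by simp only [Prod.smul_fst, Prod.smul_snd, smul_dotProduct, smul_eq_mul]; ring)
    (fun x f g ↦ by rw [map_add, gradientAt_add, dotProduct_add]; ring)
    (fun a x f ↦ by
      rw [smul_eval, gradientAt_const_smul, dotProduct_smul, smul_eq_mul, smul_eq_mul]; ring)

theorem firstOrderEval_apply (p : σ → R) (x : R × (σ → R)) (f : MvPolynomial σ R) :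
    firstOrderEval p x f = x.1 * eval p f + x.2 ⬝ᵥ gradientAt p f := rfl

theorem firstOrderEval_map (φ : R →+* S) (p v : σ → R) (c : R) (f : MvPolynomial σ R) :
    firstOrderEval (φ ∘ p) (φ c, φ ∘ v) (map φ f) = φ (firstOrderEval p (c, v) f) := by
  simp [firstOrderEval_apply, gradientAt_map, RingHom.map_dotProduct, map_eval]

variable (σ) in
/-- The exponent vectors of the monomials of degree `d` in variables indexed by `σ`. They index the
coefficients of a form of degree `d`. -/
abbrev MonomialOfDegree (d : ℕ) : Type _ := {α : σ →₀ ℕ // α.degree = d}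

noncomputable instance fintypeMonomialOfDegree (d : ℕ) : Fintype (MonomialOfDegree σ d) :=
  Set.Finite.fintype (Finsupp.finite_of_degree_eq d)

theorem linearMap_apply_eq_sum_of_isHomogeneous {M : Type*} [AddCommMonoid M] [Module R M]
    {d : ℕ} {f : MvPolynomial σ R} (hf : f.IsHomogeneous d) (φ : MvPolynomial σ R →ₗ[R] M) :
    φ f = ∑ α : MonomialOfDegree σ d, f.coeff α • φ (monomial α 1) := by
  have hsupp : f = ∑ α : MonomialOfDegree σ d, monomial α (f.coeff α) := by
    classical
    ext β
    simp only [coeff_sum, coeff_monomial]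
    by_cases hβ : β.degree = d
    · rw [Finset.sum_eq_single ⟨β, hβ⟩] <;> simp +contextual [Subtype.ext_iff]
    · rw [hf.coeff_eq_zero hβ, Finset.sum_eq_zero]
      exact fun α _ ↦ if_neg (by rintro rfl; exact hβ α.2)
  conv_lhs => rw [hsupp]
  simp [← map_smul]

theorem firstOrderEval_algebraMap_eq_linearCombination [Algebra R S] {d : ℕ}
    {f : MvPolynomial σ S} (hf : f.IsHomogeneous d) (p v : σ → R) (c : R) :
    firstOrderEval (algebraMap R S ∘ p) (algebraMap R S c, algebraMap R S ∘ v) f =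
      Fintype.linearCombination R (fun α : MonomialOfDegree σ d ↦ f.coeff α)
        fun α ↦ firstOrderEval p (c, v) (monomial α 1) := by
  rw [linearMap_apply_eq_sum_of_isHomogeneous hf, Fintype.linearCombination_apply]
  refine Finset.sum_congr rfl fun α _ ↦ ?_
  rw [← map_one (algebraMap R S), ← map_monomial, firstOrderEval_map, smul_eq_mul, mul_comm,
    Algebra.smul_def]

theorem eq_zero_of_firstOrderEval_monomial_eq_zero [IsDomain R] {p v : σ → R} {c : R} {d : ℕ}
    (hd : 1 ≤ d) {i : σ} (hpi : p i ≠ 0) (hvi : v i = 0)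
    (h : ∀ α : MonomialOfDegree σ d, firstOrderEval p (c, v) (monomial α 1) = 0) :
    c = 0 ∧ v = 0 := by
  classical
  have hform {f : MvPolynomial σ R} (hf : f.IsHomogeneous d) :
      c * eval p f + v ⬝ᵥ gradientAt p f = 0 := by
    rw [← firstOrderEval_apply p (c, v), linearMap_apply_eq_sum_of_isHomogeneous hf]
    exact Finset.sum_eq_zero fun α _ ↦ by rw [h, smul_zero]
  have hc : c = 0 := by
    simpa [gradientAt_X_pow, hvi, hpi] using hform (isHomogeneous_X_pow i d)
  refine ⟨hc, funext fun j ↦ ?_⟩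
  have hij : (X i ^ (d - 1) * X j : MvPolynomial σ R).IsHomogeneous d := by
    simpa [Nat.sub_add_cancel hd] using (isHomogeneous_X_pow i (d - 1)).mul (isHomogeneous_X R j)
  simpa [gradientAt_mul, gradientAt_X_pow, gradientAt_X, hc, hvi, hpi] using hform hij

end Gradient

/-! ### Generic forms and transversality -/

theorem finrank_le_finrank_ker_prod_add_two {F V : Type*} [Field F] [AddCommGroup V] [Module F V]
    [FiniteDimensional F V] (f g : Module.Dual F V) :
    Module.finrank F V ≤ Module.finrank F (f.prod g).ker + 2 := by
  have hrange : Module.finrank F (f.prod g).range ≤ 2 := by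
    simpa [one_add_one_eq_two] using (f.prod g).range.finrank_le
  have := (f.prod g).finrank_range_add_finrank_ker
  lia

section GenericForm

open Cardinal Algebra

variable {k : Type u} [Field k] {K : Type v} [Field K] [Algebra k K] {σ : Type w}

variable (k) in
/-- A form of degree `d` that is generic over `k`: its coefficients, indexed by all the monomials
of degree `d`, are algebraically independent over `k`. -/
structure IsGenericForm (d : ℕ) (s : MvPolynomial σ K) : Prop where
  isHomogeneous : s.IsHomogeneous d
  algebraicIndependent : AlgebraicIndependent k fun α : MonomialOfDegree σ d ↦ s.coeff α

theorem isGenericForm_fin_three {d : ℕ} {s : MvPolynomial (Fin 3) K} (hs : s.IsHomogeneous d)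
    (hgen : AlgebraicIndependent k
      fun α : {α : Fin 3 →₀ ℕ // α 0 + α 1 + α 2 = d} ↦ s.coeff (α : Fin 3 →₀ ℕ)) :
    IsGenericForm k d s where
  isHomogeneous := hs
  algebraicIndependent :=
    hgen.comp (Equiv.subtypeEquivRight fun α : Fin 3 →₀ ℕ ↦
      by rw [Finsupp.degree_eq_sum, Fin.sum_univ_three]) (Equiv.injective _)

variable {d e : ℕ} {s : MvPolynomial σ K} {t : MvPolynomial σ k}

theorem finrank_add_one_le_trdeg_of_isGenericForm [Fintype σ] (hs : IsGenericForm k d s)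
    (hd : 1 ≤ d) {F : IntermediateField k K} {p : σ → F} {i : σ} (hpi : p i ≠ 0)
    (hsp : eval (algebraMap F K ∘ p) s = 0) {T : Submodule F (σ → F)} (hTi : ∀ v ∈ T, v i = 0)
    (hTs : ∀ v ∈ T, (algebraMap F K ∘ v) ⬝ᵥ gradientAt (algebraMap F K ∘ p) s = 0) :
    ((Module.finrank F T + 1 : ℕ) : Cardinal) ≤ trdeg k F := by
  let Φ : F × T →ₗ[F] (MonomialOfDegree σ d → F) := LinearMap.pi fun α ↦
    (firstOrderEval p).flip (monomial α 1) ∘ₗ LinearMap.prodMap LinearMap.id T.subtype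
  have hΦ : Function.Injective Φ := by
    refine (injective_iff_map_eq_zero Φ).2 fun x hx ↦ ?_
    obtain ⟨hc, hv⟩ := eq_zero_of_firstOrderEval_monomial_eq_zero hd hpi (hTi _ x.2.2)
      (congrFun hx)
    exact Prod.ext hc (Subtype.ext hv)
  have hrange : Φ.range ≤
      (Fintype.linearCombination F fun α : MonomialOfDegree σ d ↦ s.coeff α).ker := by
    rintro _ ⟨⟨c, v⟩, rfl⟩
    refine (firstOrderEval_algebraMap_eq_linearCombination hs.isHomogeneous p v c).symm.trans ?_
    rw [firstOrderEval_apply, hsp, hTs v v.2, mul_zero, add_zero]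
  have hfinrank := Submodule.finrank_mono hrange
  rw [LinearMap.finrank_range_of_inj hΦ, Module.finrank_prod, Module.finrank_self,
    add_comm] at hfinrank
  exact le_trans (mod_cast hfinrank)
    (finrank_ker_linearCombination_le_trdeg F hs.algebraicIndependent)

variable [Finite σ] {p : σ → K} {i : σ}

theorem linearIndependent_gradientAt_of_apply_eq_one (hs : IsGenericForm k d s) (hd : 1 ≤ d)
    (ht0 : t ≠ 0) (ht : t.IsHomogeneous e) (hpi : p i = 1) (hsp : eval p s = 0)
    (htp : eval p (map (algebraMap k K) t) = 0)
    (hgrad : gradientAt p (map (algebraMap k K) t) ≠ 0) :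
    LinearIndependent K ![gradientAt p s, gradientAt p (map (algebraMap k K) t)] := by
  rw [LinearIndependent.pair_symm_iff, LinearIndependent.pair_iff' hgrad]
  intro a ha
  cases nonempty_fintype σ
  let F := IntermediateField.adjoin k (Set.range p)
  let pF (j : σ) : F := ⟨p j, IntermediateField.subset_adjoin _ _ (Set.mem_range_self j)⟩
  let w : σ → F := gradientAt pF (map (algebraMap k F) t)
  have hw : algebraMap F K ∘ w = gradientAt p (map (algebraMap k K) t) := by
    rw [← gradientAt_map, map_map, ← IsScalarTower.algebraMap_eq]
    rfl
  let T : Submodule F (σ → F) := ((LinearMap.proj i).prod (dotProductBilin F F w)).ker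
  have hT : Fintype.card σ ≤ Module.finrank F T + 2 := by
    simpa using finrank_le_finrank_ker_prod_add_two (LinearMap.proj i) (dotProductBilin F F w)
  have hTs : ∀ v ∈ T, (algebraMap F K ∘ v) ⬝ᵥ gradientAt p s = 0 := fun v hv ↦ by
    have hwv : w ⬝ᵥ v = 0 := congrArg Prod.snd hv
    rw [← ha, ← hw, dotProduct_smul, ← RingHom.map_dotProduct, dotProduct_comm, hwv, map_zero,
      smul_zero]
  have hlower : ((Module.finrank F T + 1 : ℕ) : Cardinal) ≤ trdeg k F :=
    finrank_add_one_le_trdeg_of_isGenericForm hs hd (p := pF) (i := i)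
      (fun h ↦ one_ne_zero (hpi.symm.trans (congrArg Subtype.val h))) hsp
      (fun v hv ↦ congrArg Prod.fst hv) hTs
  have hupper : trdeg k F + 2 ≤ Nat.card σ :=
    trdeg_adjoin_range_add_two_le hpi ht0 ht (by rwa [aeval_def, ← eval_map])
  have h := (add_le_add_left hlower 2).trans hupper
  rw [Nat.card_eq_fintype_card] at h
  norm_cast at h
  lia

theorem gradientAt_ne_zero_of_card_le_three [PerfectField k] (hσ : Nat.card σ ≤ 3)
    (hs : IsGenericForm k d s) (hd : 1 ≤ d) (ht0 : t ≠ 0) (htsf : Squarefree t)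
    (ht : t.IsHomogeneous e) (hpi : p i = 1) (hsp : eval p s = 0)
    (htp : eval p (map (algebraMap k K) t) = 0) :
    gradientAt p (map (algebraMap k K) t) ≠ 0 := by
  intro hgrad
  cases nonempty_fintype σ
  let F := IntermediateField.adjoin k (Set.range p)
  let pF (j : σ) : F := ⟨p j, IntermediateField.subset_adjoin _ _ (Set.mem_range_self j)⟩
  have hlower : 1 ≤ trdeg k F := by
    simpa using finrank_add_one_le_trdeg_of_isGenericForm hs hd (p := pF) (i := i) (T := ⊥)
      (fun h ↦ one_ne_zero (hpi.symm.trans (congrArg Subtype.val h))) hsp (by simp) (by simp)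
  have hupper : trdeg k F + 3 ≤ Nat.card σ :=
    trdeg_adjoin_range_add_three_le hpi ht0 htsf ht (by rwa [aeval_def, ← eval_map])
      fun j ↦ by rw [aeval_def, ← eval_map, ← pderiv_map]; exact congrFun hgrad j
  have h := (add_le_add_left hlower 3).trans hupper
  norm_cast at h
  lia

theorem moving_lemma_reduced_curves_general [PerfectField k] (hσ : Nat.card σ ≤ 3)
    (hd : 1 ≤ d) (ht0 : t ≠ 0) (htsf : Squarefree t) (ht : t.IsHomogeneous e)
    (hs : IsGenericForm k d s) (hp : p ≠ 0) (hsp : eval p s = 0)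
    (htp : eval p (map (algebraMap k K) t) = 0) :
    LinearIndependent K ![gradientAt p s, gradientAt p (map (algebraMap k K) t)] := by
  obtain ⟨i, hpi⟩ := Function.ne_iff.1 hp
  have htK := ht.map (algebraMap k K)
  have hqi : ((p i)⁻¹ • p) i = 1 := inv_mul_cancel₀ hpi
  have hsq : eval ((p i)⁻¹ • p) s = 0 := by
    rw [eval_smul_of_isHomogeneous hs.isHomogeneous, hsp, mul_zero]
  have htq : eval ((p i)⁻¹ • p) (map (algebraMap k K) t) = 0 := by
    rw [eval_smul_of_isHomogeneous htK, htp, mul_zero]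
  have hq := linearIndependent_gradientAt_of_apply_eq_one hs hd ht0 ht hqi hsq htq
    (gradientAt_ne_zero_of_card_le_three hσ hs hd ht0 htsf ht hqi hsq htq)
  have hunit (n : ℕ) : IsUnit ((p i)⁻¹ ^ n) := (pow_ne_zero n (inv_ne_zero hpi)).isUnit
  rwa [gradientAt_smul_of_isHomogeneous hs.isHomogeneous, gradientAt_smul_of_isHomogeneous htK,
    LinearIndependent.pair_smul_smul_iff (hunit _) (hunit _)] at hq

end GenericForm

/-- Moving Lemma for reduced curves (Lemma 4.12): let `t ∈ L[X,Y,Z]` be a nonzero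
squarefree homogeneous polynomial of degree `e` (a reduced projective plane curve) and let
`s ∈ K[X,Y,Z]` be homogeneous of degree `d` with all of its coefficients (indexed by the
monomials of degree `d`) algebraically independent over `L` (a generic degree-`d` curve).
Then at every nonzero common zero `p` of `s` and `t`, the gradients of `s` and `t` are
linearly independent over `K`: the generic curve meets `t = 0` transversally at simple
points. -/
theorem moving_lemma_reduced_curves (L K : Type) [Field L] [IsAlgClosed L]
    [Field K] [IsAlgClosed K] [Algebra L K] (d e : ℕ) (hd : 1 ≤ d) (he : 1 ≤ e)
    (t : MvPolynomial (Fin 3) L) (ht0 : t ≠ 0) (htsf : Squarefree t)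
    (hthom : t.IsHomogeneous e)
    (s : MvPolynomial (Fin 3) K) (hshom : s.IsHomogeneous d)
    (hgen : AlgebraicIndependent L
      (fun α : {α : Fin 3 →₀ ℕ // α 0 + α 1 + α 2 = d} => s.coeff (α : Fin 3 →₀ ℕ))) :
    ∀ p : Fin 3 → K, p ≠ 0 → eval p s = 0 →
      eval p (MvPolynomial.map (algebraMap L K) t) = 0 →
      LinearIndependent K
        ![(fun i : Fin 3 => eval p (pderiv i s)),
          (fun i : Fin 3 => eval p (pderiv i (MvPolynomial.map (algebraMap L K) t)))] := by
  intro p hp hsp htp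
  exact moving_lemma_reduced_curves_general (by simp) hd ht0 htsf hthom
    (isGenericForm_fin_three hshom hgen) hp hsp htp
end

section
/- Let L be an algebraically closed field and let f, g ∈ L[x,y] be polynomials which, viewed as polynomials in x with coefficients in L[y], are monic of positive x-degree, and which have no common nonconstant factor. Let R(y) = Res_x(f,g) ∈ L[y] be their resultant with respect to x; then R ≠ 0, and the order of vanishing of R at y = 0 (the multiplicity of 0 as a root of R) equals ∑_{a ∈ L, f(a,0) = g(a,0) = 0} I(f,g,(a,0)), the sum of the intersection multiplicities of the curves f = 0 and g = 0 at their common points on the line y = 0. -/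
open MvPolynomial

/-- The Sylvester matrix of two polynomials `f, g` (of degrees `m = f.natDegree` and
`n = g.natDegree`): the first `n` rows are the shifted coefficient sequences of `f`, the
remaining `m` rows those of `g`. -/
noncomputable def sylvesterMatrix {R : Type*} [CommRing R] (f g : Polynomial R) :
    Matrix (Fin (f.natDegree + g.natDegree)) (Fin (f.natDegree + g.natDegree)) R :=
  Matrix.of fun i j =>
    if (i : ℕ) < g.natDegree then
      (if (i : ℕ) ≤ (j : ℕ) then f.coeff ((j : ℕ) - (i : ℕ)) else 0)
    else
      (if ((i : ℕ) - g.natDegree) ≤ (j : ℕ) then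
        g.coeff ((j : ℕ) - ((i : ℕ) - g.natDegree)) else 0)

/-- The resultant of two polynomials: the determinant of their Sylvester matrix. -/
noncomputable def resultant {R : Type*} [CommRing R] (f g : Polynomial R) : R :=
  (sylvesterMatrix f g).det

/-- The identification `L[x,y] ≃ (L[y])[x]` (the outer variable of the iterated
polynomial ring is `x`, the first variable of the multivariate ring). -/
noncomputable def mvToPolyPoly (L : Type) [Field L] :
    MvPolynomial (Fin 2) L ≃ₐ[L] Polynomial (Polynomial L) :=
  (MvPolynomial.finSuccEquiv L 1).trans
    (Polynomial.mapAlgEquiv ((MvPolynomial.finSuccEquiv L 0).trans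
      (Polynomial.mapAlgEquiv (MvPolynomial.isEmptyAlgEquiv L (Fin 0)))))

/-!
Multiplication by `y` makes `A = L[x,y] ⧸ (f, g)` a module over `L[y]`, namely the cokernel of the
Sylvester map `(p, q) ↦ p f + q g` between free modules of the same rank. The Smith normal form of
that map presents `A` as a product of modules `L[y] ⧸ (dᵢ)` with `∏ dᵢ` equal to the resultant up to
a unit, so the resultant is, up to a unit, the characteristic polynomial of `y` acting on the
finite-dimensional algebra `A`. On the other hand `A` is the product of its localizations, and
`y - b` is nilpotent on those whose maximal ideal contains it and invertible on the others, so the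
multiplicity of the root `b` is the sum of the dimensions of the former. By the Nullstellensatz
these are the local rings of `A` at the common points of the two curves on the line `y = b`.
-/

section Charpoly

open Module

theorem charpoly_piMap {R ι : Type*} [CommRing R] [Fintype ι] {M : ι → Type*}
    [∀ i, AddCommGroup (M i)] [∀ i, Module R (M i)] [∀ i, Module.Free R (M i)]
    [∀ i, Module.Finite R (M i)] (φ : ∀ i, End R (M i)) :
    LinearMap.charpoly (LinearMap.piMap φ) = ∏ i, (φ i).charpoly := by
  classical
  let : LinearOrder ι := LinearOrder.lift' (Fintype.equivFin ι) (Fintype.equivFin ι).injective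
  let v := fun i => Free.chooseBasis R (M i)
  let A := LinearMap.toMatrix (Pi.basis v) (Pi.basis v) (LinearMap.piMap φ)
  have hentry : ∀ p q, A p q =
      (v p.1).repr (φ p.1 ((Pi.single q.1 (v q.1 q.2) : ∀ i, M i) p.1)) p.2 := by
    simp [A, LinearMap.toMatrix_apply]
  have hblock : A.BlockTriangular Sigma.fst := fun p q hqp => by
    rw [hentry, Pi.single_eq_of_ne hqp.ne', map_zero, map_zero, Finsupp.zero_apply]
  have hdiag : ∀ i, Matrix.reindex (Equiv.sigmaSubtype i) (Equiv.sigmaSubtype i)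
      (A.toSquareBlock Sigma.fst i) = LinearMap.toMatrix (v i) (v i) (φ i) := fun i => by
    ext p q
    exact (hentry ⟨i, p⟩ ⟨i, q⟩).trans (by rw [Pi.single_eq_same, LinearMap.toMatrix_apply])
  rw [← LinearMap.charpoly_toMatrix _ (Pi.basis v), Matrix.charpoly, hblock.charmatrix.det_fintype]
  refine Finset.prod_congr rfl fun i _ => ?_
  rw [← LinearMap.charpoly_toMatrix (φ i) (v i), ← Matrix.charmatrix_toSquareBlock, ← hdiag,
    Matrix.charpoly_reindex, Matrix.charpoly]

theorem charpoly_lmul_algEquiv {K A B : Type*} [CommRing K] [Ring A] [Ring B]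
    [Algebra K A] [Algebra K B] [Module.Free K A] [Module.Finite K A] [Module.Free K B]
    [Module.Finite K B] (e : A ≃ₐ[K] B) (a : A) :
    (Algebra.lmul K B (e a)).charpoly = (Algebra.lmul K A a).charpoly := by
  rw [← e.toLinearEquiv.charpoly_conj]
  congr 1
  ext b
  simp [LinearEquiv.conj_apply]

open scoped Polynomial

theorem finite_quotient_span_singleton {K : Type*} [Field K] {d : K[X]} (hd : d ≠ 0) :
    Module.Finite K (K[X] ⧸ Ideal.span {d}) :=
  (AdjoinRoot.powerBasis hd).finite

theorem associated_charpoly_lsmul_X_quotient {K : Type*} [Field K] {d : K[X]}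
    [Module.Finite K (K[X] ⧸ Ideal.span {d})] (hd : d ≠ 0) :
    Associated (Algebra.lsmul K K (K[X] ⧸ Ideal.span {d}) (Polynomial.X : K[X])).charpoly d := by
  have : Module.Finite K (AdjoinRoot d) := finite_quotient_span_singleton hd
  let pb := AdjoinRoot.powerBasis hd
  suffices h : Associated (Algebra.lmul K (AdjoinRoot d) pb.gen).charpoly d from h
  rw [← LinearMap.charpoly_toMatrix _ pb.basis, ← Algebra.leftMulMatrix_apply,
    charpoly_leftMulMatrix, AdjoinRoot.minpoly_powerBasis_gen]
  exact associated_mul_unit_left _ _ (Polynomial.isUnit_C.mpr (by simpa using hd))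

end Charpoly

section Cokernel

open Module

variable {R ι V W T : Type*} [CommRing R] [IsDomain R] [IsPrincipalIdealRing R] [Fintype ι]
  [AddCommGroup V] [Module R V] [AddCommGroup W] [Module R W] [AddCommGroup T] [Module R T]

theorem associated_det_toMatrix_prod_smithNormalFormCoeffs [DecidableEq ι] (b₁ : Basis ι R V)
    (b₂ : Basis ι R W) {φ : V →ₗ[R] W} (hφ : Function.Injective φ)
    (hrank : finrank R (LinearMap.range φ) = finrank R W) :
    Associated (LinearMap.toMatrix b₁ b₂ φ).det
      (∏ i, Submodule.smithNormalFormCoeffs b₂ hrank i) := by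
  let top := Submodule.smithNormalFormTopBasis b₂ hrank
  let bot := Submodule.smithNormalFormBotBasis b₂ hrank
  let e := LinearEquiv.ofInjective φ hφ
  have hdiag : LinearMap.toMatrix bot top (LinearMap.range φ).subtype =
      Matrix.diagonal (Submodule.smithNormalFormCoeffs b₂ hrank) := by
    ext i j
    rw [LinearMap.toMatrix_apply, Submodule.subtype_apply, Submodule.smithNormalFormBotBasis_def,
      map_smul, Basis.repr_self, Finsupp.smul_single_one, Finsupp.single_apply,
      Matrix.diagonal_apply]
    grind
  have hfactor : φ = LinearMap.id ∘ₗ (LinearMap.range φ).subtype ∘ₗ e.toLinearMap := rfl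
  have he : IsUnit (LinearMap.toMatrix b₁ bot e.toLinearMap).det := e.isUnit_det b₁ bot
  have hid : IsUnit (LinearMap.toMatrix top b₂ (LinearMap.id : W →ₗ[R] W)).det :=
    (LinearEquiv.refl R W).isUnit_det top b₂
  conv_lhs => rw [hfactor, LinearMap.toMatrix_comp b₁ top b₂, LinearMap.toMatrix_comp b₁ bot top,
    Matrix.det_mul, Matrix.det_mul, hdiag, Matrix.det_diagonal, mul_left_comm]
  exact associated_mul_unit_left _ _ (hid.mul he)

theorem exists_associated_det_equiv_pi_quotient [DecidableEq ι] (b₁ : Basis ι R V)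
    (b₂ : Basis ι R W) {φ : V →ₗ[R] W} (hφ : Function.Injective φ)
    {π : W →ₗ[R] T} (hπ : Function.Surjective π) (hexact : Function.Exact φ π) :
    ∃ d : ι → R, (∀ i, d i ≠ 0) ∧ Associated (LinearMap.toMatrix b₁ b₂ φ).det (∏ i, d i) ∧
      Nonempty (T ≃ₗ[R] ∀ i, R ⧸ Ideal.span {d i}) := by
  have hrank : finrank R (LinearMap.range φ) = finrank R W := by
    rw [LinearMap.finrank_range_of_inj hφ, finrank_eq_card_basis b₁, finrank_eq_card_basis b₂]
  exact ⟨_, Submodule.smithNormalFormCoeffs_ne_zero b₂ hrank,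
    associated_det_toMatrix_prod_smithNormalFormCoeffs b₁ b₂ hφ hrank,
    ⟨(hexact.linearEquivOfSurjective hπ).symm ≪≫ₗ
      Submodule.quotientEquivPiSpan (LinearMap.range φ) b₂ hrank⟩⟩

end Cokernel

section PolynomialModule

open Module
open scoped Polynomial

variable {K ι V W T : Type*} [Field K] [AddCommGroup V] [Module K[X] V]
  [AddCommGroup W] [Module K[X] W] [AddCommGroup T] [Module K T] [Module K[X] T]
  [IsScalarTower K K[X] T]

theorem finite_of_equiv_pi_quotient [Finite ι] {d : ι → K[X]} (hd : ∀ i, d i ≠ 0)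
    (e : T ≃ₗ[K[X]] ∀ i, K[X] ⧸ Ideal.span {d i}) : Module.Finite K T := by
  have := fun i => finite_quotient_span_singleton (hd i)
  exact Module.Finite.equiv (e.restrictScalars K).symm

theorem associated_charpoly_lsmul_X_prod [Fintype ι] [Module.Finite K T] {d : ι → K[X]}
    (hd : ∀ i, d i ≠ 0) (e : T ≃ₗ[K[X]] ∀ i, K[X] ⧸ Ideal.span {d i}) :
    Associated (Algebra.lsmul K K T (Polynomial.X : K[X])).charpoly (∏ i, d i) := by
  have := fun i => finite_quotient_span_singleton (hd i)
  let e' := e.restrictScalars K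
  have hconj : e'.conj (Algebra.lsmul K K T (Polynomial.X : K[X])) =
      LinearMap.piMap fun i =>
        Algebra.lsmul K K (K[X] ⧸ Ideal.span {d i}) (Polynomial.X : K[X]) := by
    ext1 v
    exact (map_smul e _ _).trans (congrArg _ (e.apply_symm_apply v))
  rw [← e'.charpoly_conj, hconj, charpoly_piMap]
  exact Associated.prod _ _ _ fun i _ => associated_charpoly_lsmul_X_quotient (hd i)

theorem finite_of_exact [Finite ι] (b₁ : Basis ι K[X] V) (b₂ : Basis ι K[X] W)
    {φ : V →ₗ[K[X]] W} (hφ : Function.Injective φ)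
    {π : W →ₗ[K[X]] T} (hπ : Function.Surjective π) (hexact : Function.Exact φ π) :
    Module.Finite K T := by
  classical
  have := Fintype.ofFinite ι
  obtain ⟨d, hd, -, ⟨e⟩⟩ := exists_associated_det_equiv_pi_quotient b₁ b₂ hφ hπ hexact
  exact finite_of_equiv_pi_quotient hd e

theorem associated_charpoly_lsmul_X_det [Fintype ι] [DecidableEq ι] [Module.Finite K T]
    (b₁ : Basis ι K[X] V) (b₂ : Basis ι K[X] W) {φ : V →ₗ[K[X]] W} (hφ : Function.Injective φ)
    {π : W →ₗ[K[X]] T} (hπ : Function.Surjective π) (hexact : Function.Exact φ π) :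
    Associated (Algebra.lsmul K K T (Polynomial.X : K[X])).charpoly
      (LinearMap.toMatrix b₁ b₂ φ).det := by
  obtain ⟨d, hd, hdet, ⟨e⟩⟩ := exists_associated_det_equiv_pi_quotient b₁ b₂ hφ hπ hexact
  exact (associated_charpoly_lsmul_X_prod hd e).trans hdet.symm

end PolynomialModule

section SylvesterMap

open Module
open scoped Polynomial

variable {R : Type*} [CommRing R] [Nontrivial R] {f g : R[X]} {m : ℕ}

theorem sylvesterMap_injective [DecompositionMonoid R[X]] (hf : f.Monic)
    (hg : g.natDegree ≤ m) (hcop : IsRelPrime f g) :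
    Function.Injective (Polynomial.sylvesterMap g f hg le_rfl) := by
  rw [injective_iff_map_eq_zero]
  rintro ⟨⟨p, hp⟩, ⟨q, hq⟩⟩ h
  have h' : g * q + f * p = 0 := congrArg Subtype.val h
  have hdvd : f ∣ q := hcop.dvd_of_dvd_mul_left ⟨-p, by linear_combination h'⟩
  obtain rfl : q = 0 := by
    by_contra hne
    rw [Polynomial.mem_degreeLT, ← Polynomial.degree_eq_natDegree hf.ne_zero] at hq
    exact hf.not_dvd_of_degree_lt hne hq hdvd
  obtain rfl : p = 0 := hf.isRegular.left.mul_left_eq_zero_iff.mp (by simpa using h')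
  rfl

theorem mem_range_sylvesterMap_iff (hf : f.Monic) (hg : g.natDegree ≤ m)
    {w : Polynomial.degreeLT R (m + f.natDegree)} :
    w ∈ LinearMap.range (Polynomial.sylvesterMap g f hg le_rfl) ↔
      (w : R[X]) ∈ Ideal.span {f, g} := by
  rw [Ideal.mem_span_pair]
  constructor
  · rintro ⟨⟨p, q⟩, rfl⟩
    exact ⟨p, q, by rw [Polynomial.sylvesterMap_apply_coe]; ring⟩
  rintro ⟨a, b, hw⟩
  let q := b %ₘ f
  let p := a + (b /ₘ f) * g
  have hsum : g * q + f * p = w := by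
    linear_combination hw + g * Polynomial.modByMonic_add_div b f
  have hq : q ∈ Polynomial.degreeLT R f.natDegree := by
    rw [Polynomial.mem_degreeLT, ← Polynomial.degree_eq_natDegree hf.ne_zero]
    exact Polynomial.degree_modByMonic_lt b hf
  have hgq : g * q ∈ Polynomial.degreeLT R (m + f.natDegree) := by
    simpa using (Polynomial.sylvesterMap g f hg le_rfl (0, ⟨q, hq⟩)).2
  have hfp : p * f ∈ Polynomial.degreeLT R (m + f.natDegree) := by
    rw [mul_comm, eq_sub_of_add_eq' hsum]
    exact sub_mem w.2 hgq
  have hp : p ∈ Polynomial.degreeLT R m := by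
    rw [Polynomial.mem_degreeLT, hf.degree_mul, Polynomial.degree_eq_natDegree hf.ne_zero,
      Nat.cast_add] at hfp
    exact Polynomial.mem_degreeLT.mpr (lt_of_add_lt_add_right hfp)
  exact ⟨(⟨p, hp⟩, ⟨q, hq⟩), Subtype.ext hsum⟩

theorem surjective_mk_comp_degreeLT_subtype {I : Ideal R[X]} (hf : f.Monic) (hfI : f ∈ I)
    (hm : f.natDegree ≤ m) : Function.Surjective
      ((Ideal.Quotient.mkₐ R I).toLinearMap ∘ₗ (Polynomial.degreeLT R m).subtype) := by
  intro z
  obtain ⟨p, rfl⟩ := Ideal.Quotient.mk_surjective z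
  have hp : p %ₘ f ∈ Polynomial.degreeLT R m := Polynomial.mem_degreeLT.mpr <|
    (Polynomial.degree_modByMonic_lt p hf).trans_le
      (Polynomial.degree_le_natDegree.trans (by exact_mod_cast hm))
  refine ⟨⟨p %ₘ f, hp⟩, Ideal.Quotient.eq.mpr ?_⟩
  have h : p %ₘ f - p = f * -(p /ₘ f) := by
    linear_combination Polynomial.modByMonic_add_div p f
  simpa only [Submodule.subtype_apply, h] using I.mul_mem_right _ hfI

theorem exact_sylvesterMap_mk (hf : f.Monic) (hg : g.natDegree ≤ m) :
    Function.Exact (Polynomial.sylvesterMap g f hg le_rfl)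
      ((Ideal.Quotient.mkₐ R (Ideal.span {f, g})).toLinearMap ∘ₗ
        (Polynomial.degreeLT R (m + f.natDegree)).subtype) :=
  fun _ => Ideal.Quotient.eq_zero_iff_mem.trans (mem_range_sylvesterMap_iff hf hg).symm

end SylvesterMap

section PlaneCurves

open Module
open scoped Polynomial

variable {K : Type*} [Field K] {f g : K[X][X]}

theorem finite_quotient_span_pair (hf : f.Monic) (hcop : IsRelPrime f g) :
    Module.Finite K (K[X][X] ⧸ Ideal.span {f, g}) :=
  finite_of_exact (((Polynomial.degreeLT.basis K[X] g.natDegree).prod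
    (Polynomial.degreeLT.basis K[X] f.natDegree)).reindex finSumFinEquiv)
    (Polynomial.degreeLT.basis K[X] (g.natDegree + f.natDegree))
    (sylvesterMap_injective hf le_rfl hcop)
    (surjective_mk_comp_degreeLT_subtype hf (Ideal.subset_span (by simp)) (Nat.le_add_left _ _))
    (exact_sylvesterMap_mk hf le_rfl)

theorem associated_charpoly_lmul_C_X_resultant [Module.Finite K (K[X][X] ⧸ Ideal.span {f, g})]
    (hf : f.Monic) (hcop : IsRelPrime f g) :
    Associated (Algebra.lmul K (K[X][X] ⧸ Ideal.span {f, g})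
      (Ideal.Quotient.mk _ (Polynomial.C Polynomial.X))).charpoly (Polynomial.resultant g f) := by
  have hlmul : Algebra.lmul K (K[X][X] ⧸ Ideal.span {f, g})
      (Ideal.Quotient.mk _ (Polynomial.C Polynomial.X)) =
      Algebra.lsmul K K (K[X][X] ⧸ Ideal.span {f, g}) (Polynomial.X : K[X]) := by
    refine LinearMap.ext fun z => ?_
    obtain ⟨p, rfl⟩ := Ideal.Quotient.mk_surjective z
    change Ideal.Quotient.mk _ (Polynomial.C Polynomial.X * p) =
      Ideal.Quotient.mk _ ((Polynomial.X : K[X]) • p)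
    rw [Polynomial.smul_eq_C_mul]
  rw [hlmul, Polynomial.resultant, ← Polynomial.toMatrix_sylvesterMap' g f le_rfl le_rfl]
  exact associated_charpoly_lsmul_X_det _ _ (sylvesterMap_injective hf le_rfl hcop)
    (surjective_mk_comp_degreeLT_subtype hf (Ideal.subset_span (by simp)) (Nat.le_add_left _ _))
    (exact_sylvesterMap_mk hf le_rfl)

end PlaneCurves

section LocalAlgebra

open Module

variable {K A : Type*} [Field K] [CommRing A] [Algebra K A]

theorem mem_maxGenEigenspace_lmul_iff {a z : A} {μ : K} :
    z ∈ (Algebra.lmul K A a).maxGenEigenspace μ ↔ ∃ k : ℕ, (a - algebraMap K A μ) ^ k * z = 0 := by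
  have hsub : Algebra.lmul K A a - μ • 1 = Algebra.lmul K A (a - algebraMap K A μ) := by
    rw [map_sub, AlgHom.commutes, Algebra.algebraMap_eq_smul_one]
  rw [End.mem_maxGenEigenspace, hsub]
  simp only [← map_pow]
  rfl

open scoped Classical in
theorem rootMultiplicity_charpoly_lmul_of_isLocalRing [Module.Finite K A] [IsLocalRing A]
    (a : A) (μ : K) :
    (Algebra.lmul K A a).charpoly.rootMultiplicity μ =
      if a - algebraMap K A μ ∈ IsLocalRing.maximalIdeal A then finrank K A else 0 := by
  have : IsArtinianRing A := IsArtinianRing.of_finite K A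
  rw [← LinearMap.finrank_maxGenEigenspace_eq]
  split_ifs with h
  · obtain ⟨k, hk⟩ := Ring.KrullDimLE.isNilpotent_iff_mem_maximalIdeal.mpr h
    have htop : (Algebra.lmul K A a).maxGenEigenspace μ = ⊤ :=
      Submodule.eq_top_iff'.mpr fun z =>
        mem_maxGenEigenspace_lmul_iff.mpr ⟨k, by rw [hk, zero_mul]⟩
    rw [htop, finrank_top]
  · have hunit : IsUnit (a - algebraMap K A μ) := IsLocalRing.notMem_maximalIdeal.mp h
    have hbot : (Algebra.lmul K A a).maxGenEigenspace μ = ⊥ := by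
      refine (Submodule.eq_bot_iff _).mpr fun z hz => ?_
      obtain ⟨k, hk⟩ := mem_maxGenEigenspace_lmul_iff.mp hz
      exact (hunit.pow k).mul_right_eq_zero.mp hk
    rw [hbot, finrank_bot]

theorem rootMultiplicity_prod {R ι : Type*} [CommRing R] [IsDomain R] {s : Finset ι}
    {p : ι → Polynomial R} (hp : ∀ i ∈ s, p i ≠ 0) (μ : R) :
    (∏ i ∈ s, p i).rootMultiplicity μ = ∑ i ∈ s, (p i).rootMultiplicity μ := by
  classical
  rw [← Polynomial.count_roots, Polynomial.roots_prod _ _ (Finset.prod_ne_zero_iff.mpr hp),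
    Multiset.count_bind]
  simp only [Polynomial.count_roots, Finset.sum_map_val]

instance finite_localization_atPrime [Module.Finite K A] (P : Ideal A) [P.IsPrime] :
    Module.Finite K (Localization.AtPrime P) :=
  have : IsArtinianRing A := IsArtinianRing.of_finite K A
  Module.Finite.of_surjective (Algebra.algHom K A (Localization.AtPrime P)).toLinearMap
    (IsArtinianRing.localization_surjective P.primeCompl _)

theorem charpoly_lmul_eq_prod_localization [Module.Finite K A] [Fintype (PrimeSpectrum A)] (a : A) :
    (Algebra.lmul K A a).charpoly = ∏ P : PrimeSpectrum A,
      (Algebra.lmul K (Localization.AtPrime P.asIdeal)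
        (algebraMap A (Localization.AtPrime P.asIdeal) a)).charpoly := by
  have : IsArtinianRing A := IsArtinianRing.of_finite K A
  let e := (PrimeSpectrum.toPiLocalizationEquiv A).restrictScalars K
  rw [← charpoly_lmul_algEquiv e, ← charpoly_piMap]
  rfl

open scoped Classical in
theorem rootMultiplicity_charpoly_lmul [Module.Finite K A] [Fintype (PrimeSpectrum A)]
    (a : A) (μ : K) :
    (Algebra.lmul K A a).charpoly.rootMultiplicity μ =
      ∑ P : PrimeSpectrum A with a - algebraMap K A μ ∈ P.asIdeal,
        finrank K (Localization.AtPrime P.asIdeal) := by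
  rw [charpoly_lmul_eq_prod_localization,
    rootMultiplicity_prod fun P _ => (LinearMap.charpoly_monic _).ne_zero, Finset.sum_filter]
  refine Finset.sum_congr rfl fun P _ => ?_
  rw [rootMultiplicity_charpoly_lmul_of_isLocalRing]
  congr 1
  rw [IsScalarTower.algebraMap_apply K A, ← map_sub,
    IsLocalization.AtPrime.to_map_mem_maximal_iff _ P.asIdeal]

end LocalAlgebra

section SylvesterComparison

variable {R : Type*} [CommRing R]

theorem ite_coeff_sub_eq_ite_and (p : Polynomial R) (i j : ℕ) :
    (if i ≤ j then p.coeff (j - i) else 0) =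
      if i ≤ j ∧ j ≤ i + p.natDegree then p.coeff (j - i) else 0 := by
  rw [ite_and]
  split_ifs with h₁ h₂
  · rfl
  · exact Polynomial.coeff_eq_zero_of_natDegree_lt (by lia)
  · rfl

theorem sylvesterMatrix_eq_submatrix_transpose_sylvester (f g : Polynomial R) :
    sylvesterMatrix f g =
      (Polynomial.sylvester g f g.natDegree f.natDegree).transpose.submatrix
        (finCongr (add_comm _ _)) (finCongr (add_comm _ _)) := by
  ext i j
  obtain ⟨i, rfl⟩ := (finCongr (add_comm g.natDegree f.natDegree)).surjective i
  induction i using Fin.addCases with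
  | left i =>
    simp [sylvesterMatrix, Polynomial.sylvester, ite_coeff_sub_eq_ite_and, -Fin.val_fin_le]
  | right i => simp [sylvesterMatrix, Polynomial.sylvester, ite_coeff_sub_eq_ite_and]

theorem resultant_eq_polynomial_resultant (f g : Polynomial R) :
    resultant f g = Polynomial.resultant g f := by
  rw [resultant, sylvesterMatrix_eq_submatrix_transpose_sylvester, Matrix.det_submatrix_equiv_self,
    Matrix.det_transpose, Polynomial.resultant]

end SylvesterComparison

section LocalRing

variable {K S : Type*} [CommRing K] [CommRing S] [Algebra K S]

theorem nonempty_localization_quotient_equiv (I : Ideal S) (q : Ideal (S ⧸ I)) [q.IsPrime]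
    (p : Ideal S) [p.IsPrime] (hp : q.comap (Ideal.Quotient.mk I) = p) :
    Nonempty ((Localization.AtPrime p ⧸ I.map (algebraMap S (Localization.AtPrime p))) ≃ₗ[K]
      Localization.AtPrime q) := by
  have : q.LiesOver p := ⟨hp.symm⟩
  have h : Algebra.algebraMapSubmonoid (S ⧸ I) p.primeCompl = q.primeCompl :=
    Ideal.algebraMapSubmonoid_primeCompl_of_liesOver_surjective q p Ideal.Quotient.mk_surjective
  have hloc : IsLocalization q.primeCompl
      (Localization.AtPrime p ⧸ I.map (algebraMap S (Localization.AtPrime p))) :=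
    h ▸ inferInstance
  have : IsScalarTower K (S ⧸ I)
      (Localization.AtPrime p ⧸ I.map (algebraMap S (Localization.AtPrime p))) :=
    IsScalarTower.of_algebraMap_eq fun _ => rfl
  exact ⟨((IsLocalization.algEquiv q.primeCompl
    (Localization.AtPrime p ⧸ I.map (algebraMap S (Localization.AtPrime p)))
    (Localization.AtPrime q)).restrictScalars K).toLinearEquiv⟩

end LocalRing

theorem mvToPolyPoly_X_zero (L : Type) [Field L] :
    mvToPolyPoly L (X 0) = Polynomial.X := by
  simp [mvToPolyPoly, finSuccEquiv_X_zero]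

theorem mvToPolyPoly_X_one (L : Type) [Field L] :
    mvToPolyPoly L (X 1) = Polynomial.C Polynomial.X := by
  have h : MvPolynomial.finSuccEquiv L 1 (X 1) = Polynomial.C (X 0) :=
    finSuccEquiv_X_succ (j := 0)
  simp [mvToPolyPoly, h, finSuccEquiv_X_zero]

theorem aeval_mvToPolyPoly_symm (L : Type) [Field L] (q : Polynomial (Polynomial L)) (a b : L) :
    aeval ![a, b] ((mvToPolyPoly L).symm q) =
      Polynomial.eval a (q.map (Polynomial.evalRingHom b)) := by
  obtain ⟨q, rfl⟩ := (mvToPolyPoly L).surjective q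
  rw [AlgEquiv.symm_apply_apply]
  induction q using MvPolynomial.induction_on with
  | C c =>
    rw [← algebraMap_eq, AlgEquiv.commutes]
    simp [Polynomial.algebraMap_apply]
  | add p q hp hq => simp only [map_add, hp, hq, Polynomial.map_add, Polynomial.eval_add]
  | mul_X p i hp =>
    rw [map_mul, map_mul, hp, Polynomial.map_mul, Polynomial.eval_mul]
    congr 1
    fin_cases i
    · simp [mvToPolyPoly_X_zero]
    · simp [mvToPolyPoly_X_one]

theorem exists_eq_ptIdeal_of_isMaximal {L : Type} [Field L] [IsAlgClosed L]
    {P : Ideal (MvPolynomial (Fin 2) L)} (hP : P.IsMaximal) : ∃ p : L × L, P = ptIdeal L p := by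
  obtain ⟨x, hx⟩ := (isMaximal_iff_eq_vanishingIdeal_singleton (K := L)).mp hP
  refine ⟨(x 0, x 1), hx.trans ?_⟩
  ext q
  rw [mem_vanishingIdeal_singleton_iff, ptIdeal, RingHom.mem_ker]
  have : x = ![x 0, x 1] := by ext i; fin_cases i <;> rfl
  conv_lhs => rw [this]

theorem ptIdeal_injective (L : Type) [Field L] : Function.Injective (ptIdeal L) := by
  intro p q h
  have h₀ : X 0 - C p.1 ∈ ptIdeal L q := h ▸ by simp [ptIdeal]
  have h₁ : X 1 - C p.2 ∈ ptIdeal L q := h ▸ by simp [ptIdeal]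
  simp only [ptIdeal, RingHom.mem_ker, map_sub, aeval_X, sub_eq_zero] at h₀ h₁
  exact Prod.ext (by simpa using h₀.symm) (by simpa using h₁.symm)

section IntersectionMultiplicity

open Module

variable {L : Type} [Field L]

instance isPrime_ptIdeal (p : L × L) : (ptIdeal L p).IsPrime :=
  (ptIdeal_isMaximal L p).isPrime

theorem X_one_sub_C_mem_ptIdeal_iff {p : L × L} {b : L} : X 1 - C b ∈ ptIdeal L p ↔ p.2 = b := by
  simp [ptIdeal, sub_eq_zero]

theorem span_pair_le_ptIdeal_iff {f g : MvPolynomial (Fin 2) L} {a b : L} :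
    Ideal.span {f, g} ≤ ptIdeal L (a, b) ↔ aeval ![a, b] f = 0 ∧ aeval ![a, b] g = 0 := by
  simp [Ideal.span_le, Set.insert_subset_iff, ptIdeal]

theorem interMult_eq_finrank_localization (f g : MvPolynomial (Fin 2) L)
    [Module.Finite L (MvPolynomial (Fin 2) L ⧸ Ideal.span {f, g})] (p : L × L)
    (P : Ideal (MvPolynomial (Fin 2) L ⧸ Ideal.span {f, g})) [P.IsPrime]
    (hP : P.comap (Ideal.Quotient.mk _) = ptIdeal L p) :
    interMult L f g p = finrank L (Localization.AtPrime P) := by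
  obtain ⟨e⟩ := nonempty_localization_quotient_equiv (K := L) _ P _ hP
  rw [finrank_eq_rank, ← e.rank_eq, interMult, Ideal.map_span, Set.image_pair]

theorem exists_comap_mk_eq_ptIdeal_iff {I : Ideal (MvPolynomial (Fin 2) L)} {p : L × L} :
    (∃ P : PrimeSpectrum (MvPolynomial (Fin 2) L ⧸ I),
      P.asIdeal.comap (Ideal.Quotient.mk I) = ptIdeal L p) ↔ I ≤ ptIdeal L p := by
  constructor
  · rintro ⟨P, hP⟩
    rw [← hP]
    exact Ideal.mk_ker.ge.trans (Ideal.ker_le_comap _)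
  · intro h
    refine ⟨⟨(ptIdeal L p).map (Ideal.Quotient.mk I),
      Ideal.map_isPrime_of_surjective Ideal.Quotient.mk_surjective (by rwa [Ideal.mk_ker])⟩, ?_⟩
    rw [Ideal.comap_map_of_surjective' _ Ideal.Quotient.mk_surjective, Ideal.mk_ker,
      sup_eq_left.mpr h]

theorem exists_comap_mk_eq_ptIdeal [IsAlgClosed L] {I : Ideal (MvPolynomial (Fin 2) L)}
    [Module.Finite L (MvPolynomial (Fin 2) L ⧸ I)]
    (P : PrimeSpectrum (MvPolynomial (Fin 2) L ⧸ I)) :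
    ∃ p, P.asIdeal.comap (Ideal.Quotient.mk I) = ptIdeal L p := by
  have : IsArtinianRing (MvPolynomial (Fin 2) L ⧸ I) := IsArtinianRing.of_finite L _
  have : P.asIdeal.IsMaximal := IsArtinianRing.isMaximal_of_isPrime P.asIdeal
  exact exists_eq_ptIdeal_of_isMaximal
    (Ideal.comap_isMaximal_of_surjective _ Ideal.Quotient.mk_surjective)

theorem mk_X_one_sub_algebraMap_mem_iff {I : Ideal (MvPolynomial (Fin 2) L)}
    {P : Ideal (MvPolynomial (Fin 2) L ⧸ I)} {p : L × L} {b : L}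
    (hP : P.comap (Ideal.Quotient.mk I) = ptIdeal L p) :
    Ideal.Quotient.mk I (X 1) - algebraMap L (MvPolynomial (Fin 2) L ⧸ I) b ∈ P ↔ p.2 = b := by
  rw [← X_one_sub_C_mem_ptIdeal_iff, ← hP, Ideal.mem_comap, map_sub]
  rfl

theorem rootMultiplicity_charpoly_lmul_X_one [IsAlgClosed L] {f g : MvPolynomial (Fin 2) L}
    [Module.Finite L (MvPolynomial (Fin 2) L ⧸ Ideal.span {f, g})] (b : L) {s : Finset L}
    (hs : ∀ a, a ∈ s ↔ aeval ![a, b] f = 0 ∧ aeval ![a, b] g = 0) :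
    ((Algebra.lmul L (MvPolynomial (Fin 2) L ⧸ Ideal.span {f, g})
      (Ideal.Quotient.mk _ (X 1))).charpoly.rootMultiplicity b : Cardinal) =
      ∑ a ∈ s, interMult L f g (a, b) := by
  classical
  have : IsArtinianRing (MvPolynomial (Fin 2) L ⧸ Ideal.span {f, g}) :=
    IsArtinianRing.of_finite L _
  have := Fintype.ofFinite (PrimeSpectrum (MvPolynomial (Fin 2) L ⧸ Ideal.span {f, g}))
  have hpoint : ∀ a ∈ s, ∃ P : PrimeSpectrum (MvPolynomial (Fin 2) L ⧸ Ideal.span {f, g}),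
      P.asIdeal.comap (Ideal.Quotient.mk _) = ptIdeal L (a, b) := fun a ha =>
    exists_comap_mk_eq_ptIdeal_iff.mpr (span_pair_le_ptIdeal_iff.mpr ((hs a).mp ha))
  choose P hP using hpoint
  rw [rootMultiplicity_charpoly_lmul, Nat.cast_sum]
  refine (Finset.sum_bij P (fun a ha => ?_) (fun a ha c hc h => ?_) (fun Q hQ => ?_)
    fun a ha => interMult_eq_finrank_localization f g (a, b) _ (hP a ha)).symm
  · exact Finset.mem_filter.mpr
      ⟨Finset.mem_univ _, (mk_X_one_sub_algebraMap_mem_iff (hP a ha)).mpr rfl⟩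
  · have : ptIdeal L (a, b) = ptIdeal L (c, b) := by rw [← hP a ha, ← hP c hc, h]
    exact congrArg Prod.fst (ptIdeal_injective L this)
  · obtain ⟨⟨a, c⟩, hQa⟩ := exists_comap_mk_eq_ptIdeal Q
    have hle : Ideal.span {f, g} ≤ ptIdeal L (a, c) := exists_comap_mk_eq_ptIdeal_iff.mp ⟨Q, hQa⟩
    obtain rfl : c = b := (mk_X_one_sub_algebraMap_mem_iff hQa).mp (Finset.mem_filter.mp hQ).2
    have ha : a ∈ s := (hs a).mpr (span_pair_le_ptIdeal_iff.mp hle)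
    exact ⟨a, ha, PrimeSpectrum.ext <| Ideal.comap_injective_of_surjective _
      Ideal.Quotient.mk_surjective ((hP a ha).trans hQa.symm)⟩

end IntersectionMultiplicity

section Comparison

variable {L : Type} [Field L] {f g : Polynomial (Polynomial L)}

/-- `mvToPolyPoly` on the coordinate rings of the scheme-theoretic intersection of the curves
`f = 0` and `g = 0`: it moves `L[x,y] ⧸ (f, g)`, where intersection multiplicities live, to
`(L[y])[x] ⧸ (f, g)`, where the Sylvester map lives. -/
noncomputable def quotientSpanPairEquiv (f g : Polynomial (Polynomial L)) :
    (MvPolynomial (Fin 2) L ⧸ Ideal.span {(mvToPolyPoly L).symm f, (mvToPolyPoly L).symm g}) ≃ₐ[L]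
      Polynomial (Polynomial L) ⧸ Ideal.span {f, g} :=
  Ideal.quotientEquivAlg _ _ (mvToPolyPoly L) (by rw [Ideal.map_span]; simp [Set.image_pair])

theorem finite_quotient_span_mvToPolyPoly_symm (hf : f.Monic) (hcop : IsRelPrime f g) :
    Module.Finite L (MvPolynomial (Fin 2) L ⧸
      Ideal.span {(mvToPolyPoly L).symm f, (mvToPolyPoly L).symm g}) :=
  have := finite_quotient_span_pair hf hcop
  Module.Finite.equiv (quotientSpanPairEquiv f g).symm.toLinearEquiv

theorem associated_resultant_charpoly_lmul_X_one
    [Module.Finite L (MvPolynomial (Fin 2) L ⧸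
      Ideal.span {(mvToPolyPoly L).symm f, (mvToPolyPoly L).symm g})]
    (hf : f.Monic) (hcop : IsRelPrime f g) :
    Associated (resultant f g) (Algebra.lmul L (MvPolynomial (Fin 2) L ⧸
      Ideal.span {(mvToPolyPoly L).symm f, (mvToPolyPoly L).symm g})
        (Ideal.Quotient.mk _ (X 1))).charpoly := by
  have := finite_quotient_span_pair hf hcop
  have hX : quotientSpanPairEquiv f g (Ideal.Quotient.mk _ (X 1)) =
      Ideal.Quotient.mk (Ideal.span {f, g}) (Polynomial.C Polynomial.X) :=
    congrArg (Ideal.Quotient.mk (Ideal.span {f, g})) (mvToPolyPoly_X_one L)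
  have hcharpoly := charpoly_lmul_algEquiv (quotientSpanPairEquiv f g) (Ideal.Quotient.mk _ (X 1))
  rw [← hcharpoly, hX, resultant_eq_polynomial_resultant]
  exact (associated_charpoly_lmul_C_X_resultant hf hcop).symm

end Comparison

theorem resultant_order_eq_sum_interMult_general (L : Type) [Field L] [IsAlgClosed L]
    (f g : Polynomial (Polynomial L)) (hfm : f.Monic) (hcop : IsRelPrime f g) (b : L) :
    resultant f g ≠ 0 ∧
    ∃ hfin : {a : L | Polynomial.eval a (f.map (Polynomial.evalRingHom b)) = 0 ∧
        Polynomial.eval a (g.map (Polynomial.evalRingHom b)) = 0}.Finite,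
      ((resultant f g).rootMultiplicity b : Cardinal) =
        ∑ a ∈ hfin.toFinset,
          interMult L ((mvToPolyPoly L).symm f) ((mvToPolyPoly L).symm g) (a, b) := by
  classical
  have := finite_quotient_span_mvToPolyPoly_symm hfm hcop
  have hassoc := associated_resultant_charpoly_lmul_X_one hfm hcop
  refine ⟨hassoc.ne_zero_iff.mpr (LinearMap.charpoly_monic _).ne_zero,
    (Polynomial.finite_setOfPred_isRoot (hfm.map _).ne_zero).subset fun a ha => ha.1, ?_⟩
  rw [← Polynomial.count_roots, hassoc.roots_eq, Polynomial.count_roots]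
  refine rootMultiplicity_charpoly_lmul_X_one b fun a => ?_
  rw [Set.Finite.mem_toFinset, Set.mem_ofPred_eq, aeval_mvToPolyPoly_symm, aeval_mvToPolyPoly_symm]

/-- Abhyankar's resultant formula (used in Lemma 4.7): if `f, g ∈ (L[y])[x]` are monic in
`x` of positive degree with no common nonconstant factor, then their resultant
`R = Res_x(f,g) ∈ L[y]` is nonzero, and the order of vanishing of `R` at `y = 0` equals
the sum of the intersection multiplicities of the curves `f = 0` and `g = 0` at their
common points on the line `y = 0`. -/
theorem resultant_order_eq_sum_interMult (L : Type) [Field L] [IsAlgClosed L]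
    (f g : Polynomial (Polynomial L)) (hfm : f.Monic) (hgm : g.Monic)
    (hfd : 0 < f.natDegree) (hgd : 0 < g.natDegree)
    (hcop : IsRelPrime f g) :
    resultant f g ≠ 0 ∧
    ∃ hfin : {a : L | Polynomial.eval a (f.map (Polynomial.evalRingHom (0 : L))) = 0 ∧
        Polynomial.eval a (g.map (Polynomial.evalRingHom (0 : L))) = 0}.Finite,
      ((resultant f g).rootMultiplicity 0 : Cardinal) =
        ∑ a ∈ hfin.toFinset,
          interMult L ((mvToPolyPoly L).symm f) ((mvToPolyPoly L).symm g) (a, 0) :=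
  resultant_order_eq_sum_interMult_general L f g hfm hcop 0
end
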